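/- arXiv:2104.05141 — 3 statements merged into one kernel-verified Lean document; each statement's English description precedes it below -/
import Mathlib

section
/- Let k ≥ 1, let F_k be the free group of rank k, and let Γ = F_k × ℤ. There exists a Γ-subshift over a finite alphabet which is effectively closed by patterns but is not sofic. In particular, F_k × ℤ is not self-simulable. -/
open scoped Pointwise

namespace SelfSim

/-- The left shift action of a group `G` on the full shift `G → A`:
`(g · x)(h) = x (g⁻¹ h)`. -/
def shift {G A : Type*} [Group G] (g : G) (x : G → A) : G → A := fun h => x (g⁻¹ * h)

/-- A `G`-subshift: a closed, shift-invariant subset of the full shift `G → A`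
(`A` carrying its topology, `G → A` the product topology). -/
def IsSubshift {G A : Type*} [Group G] [TopologicalSpace A] (X : Set (G → A)) : Prop :=
  IsClosed X ∧ ∀ (g : G) (x : G → A), x ∈ X → shift g x ∈ X

/-- A subshift of finite type: there are a finite set `F ⊆ G` and a set `𝓛` of patterns
on `F` such that `x ∈ X` iff every translate of `x` restricted to `F` lies in `𝓛`. -/
def IsSFT {G A : Type*} [Group G] (X : Set (G → A)) : Prop :=
  ∃ (F : Finset G) (L : Set (↥F → A)),
    ∀ x : G → A, x ∈ X ↔ ∀ g : G, (fun h : ↥F => x (g * (h : G))) ∈ L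

/-- `φ` is a topological factor map from the shift action on `Z ⊆ G → A` onto the
action `act` of `G` on `Y ⊆ β`: continuous on `Z`, mapping `Z` into and onto `Y`,
and equivariant. -/
def IsFactorMapOnto {G A β : Type*} [Group G] [TopologicalSpace A] [TopologicalSpace β]
    (Z : Set (G → A)) (φ : (G → A) → β) (act : G → β → β) (Y : Set β) : Prop :=
  ContinuousOn φ Z ∧ Set.MapsTo φ Z Y ∧ Set.SurjOn φ Z Y ∧
    ∀ (g : G) (x : G → A), x ∈ Z → φ (shift g x) = act g (φ x)

/-- A sofic subshift: a topological factor of some subshift of finite type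
(over some finite alphabet, which we may take to be `Fin k`). -/
def IsSofic {G A : Type*} [Group G] [TopologicalSpace A] (Y : Set (G → A)) : Prop :=
  ∃ (k : ℕ) (Z : Set (G → Fin k)) (φ : (G → Fin k) → (G → A)),
    IsSFT Z ∧ IsFactorMapOnto Z φ shift Y

/-- Recursively enumerable predicate. -/
def RE {α : Type*} [Primcodable α] (p : α → Prop) : Prop :=
  Partrec fun a => Part.assert (p a) fun _ => Part.some ()

/-- `x : ℕ → A` begins with the finite word `w`. -/
def ExtendsWord {A : Type*} (x : ℕ → A) (w : List A) : Prop :=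
  ∀ i : Fin w.length, x i = w.get i

/-- A closed subset `Z ⊆ A^ℕ` is effectively closed if the set of words whose
cylinder is disjoint from `Z` is recursively enumerable. -/
def EffectivelyClosedSet {A : Type*} [Primcodable A] [TopologicalSpace A]
    (Z : Set (ℕ → A)) : Prop :=
  IsClosed Z ∧ RE fun w : List A => ∀ x : ℕ → A, ExtendsWord x w → x ∉ Z

/-- `act` defines an action of `G` on the set `X ⊆ β`. -/
def IsActionOn {G β : Type*} [Group G] (act : G → β → β) (X : Set β) : Prop :=
  (∀ g : G, Set.MapsTo (act g) X X) ∧ (∀ x ∈ X, act 1 x = x) ∧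
    ∀ (g h : G) (x : β), x ∈ X → act (g * h) x = act g (act h x)

/-- The set representation of the action `act` of `G` on `X ⊆ A^ℕ` with respect to the
finite generating tuple `s : Fin m → G` (playing the role of the generating set `S`):
the set of `y ∈ (A^S)^ℕ` of the form `y(n)(s) = (s · x)(n)` for some `x ∈ X`. -/
def SetRep {G A : Type*} [Group G] {m : ℕ} (s : Fin m → G)
    (act : G → (ℕ → A) → ℕ → A) (X : Set (ℕ → A)) : Set (ℕ → (Fin m → A)) :=
  {y | ∃ x ∈ X, ∀ i : Fin m, (fun n => y n i) = act (s i) x}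

/-- The action `act` of `G` on the closed set `X ⊆ A^ℕ` is effectively closed with respect
to the finite generating tuple `s` (which contains `1` and generates `G` as a monoid):
its set representation is an effectively closed subset of `(A^S)^ℕ`. -/
def IsEffClosedActionWith {G A : Type*} [Group G] [Primcodable A] [TopologicalSpace A]
    {m : ℕ} (s : Fin m → G) (act : G → (ℕ → A) → ℕ → A) (X : Set (ℕ → A)) : Prop :=
  IsClosed X ∧ IsActionOn act X ∧ (∃ i, s i = 1) ∧
    Submonoid.closure (Set.range s) = ⊤ ∧
    EffectivelyClosedSet (SetRep s act X)

/-- The action `act` of `G` on `X ⊆ A^ℕ` is effectively closed (with respect to some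
finite generating set containing `1`). -/
def IsEffClosedAction {G A : Type*} [Group G] [Primcodable A] [TopologicalSpace A]
    (act : G → (ℕ → A) → ℕ → A) (X : Set (ℕ → A)) : Prop :=
  ∃ (m : ℕ) (s : Fin m → G), IsEffClosedActionWith s act X

/-- The action `act` of `G` on `X ⊆ A^ℕ` is a topological factor of some `G`-subshift
of finite type. -/
def IsFactorOfSFT {G A : Type*} [Group G] [TopologicalSpace A]
    (act : G → (ℕ → A) → ℕ → A) (X : Set (ℕ → A)) : Prop :=
  ∃ (k : ℕ) (Z : Set (G → Fin k)) (φ : (G → Fin k) → (ℕ → A)),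
    IsSFT Z ∧ IsFactorMapOnto Z φ act X

/-- A group `G` is (dynamically) self-simulable if every effectively closed action of `G`
on a closed subset of `{0,1}^ℕ` is a topological factor of a `G`-subshift of finite type. -/
def SelfSimulable (G : Type*) [Group G] : Prop :=
  ∀ (X : Set (ℕ → Bool)) (act : G → (ℕ → Bool) → ℕ → Bool),
    IsEffClosedAction act X → IsFactorOfSFT act X

/-- Amenability via the Følner condition: for every finite `K` and `δ > 0` there is a
nonempty finite `F` with `|KF △ F| ≤ δ |F|`. -/
def Amenable (G : Type*) [Group G] : Prop :=
  ∀ K : Set G, K.Finite → ∀ δ : ℝ, 0 < δ →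
    ∃ F : Set G, F.Finite ∧ F.Nonempty ∧
      ((symmDiff (K * F) F).ncard : ℝ) ≤ δ * F.ncard

/-- A finitely generated group is recursively presented: for some finite tuple generating
`G` as a monoid, the set of words evaluating to the identity is recursively enumerable. -/
def RecursivelyPresented (G : Type*) [Group G] : Prop :=
  ∃ (m : ℕ) (s : Fin m → G), Submonoid.closure (Set.range s) = ⊤ ∧
    RE fun w : List (Fin m) => (w.map s).prod = 1

/-- A finitely generated group has decidable word problem: for some finite tuple generating
`G` as a monoid, the set of words evaluating to the identity is decidable. -/
def DecidableWordProblem (G : Type*) [Group G] : Prop :=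
  ∃ (m : ℕ) (s : Fin m → G), Submonoid.closure (Set.range s) = ⊤ ∧
    ComputablePred fun w : List (Fin m) => (w.map s).prod = 1

/-- A pattern coding `c` (a finite list of pairs (word over the generators, letter))
holds in the configuration `x` at position `g`: `x (g ⬝ w̲) = a` for every pair `(w, a)`
of `c`. This says exactly that `x ∈ g·[c]`. -/
def PCHolds {G A : Type*} [Group G] {m : ℕ} (s : Fin m → G) (x : G → A) (g : G)
    (c : List (List (Fin m) × A)) : Prop :=
  ∀ p ∈ c, x (g * (p.1.map s).prod) = p.2

/-- A `G`-subshift `X ⊆ A^G` is effectively closed by patterns: for some finite generating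
tuple `s`, there is a recursively enumerable set `𝒞` of pattern codings such that `X` is the
set of configurations avoiding every translate of every cylinder `[c]`, `c ∈ 𝒞`. -/
def EffClosedByPatterns {G A : Type*} [Group G] [Primcodable A] (X : Set (G → A)) : Prop :=
  ∃ (m : ℕ) (s : Fin m → G), Submonoid.closure (Set.range s) = ⊤ ∧
    ∃ 𝒞 : Set (List (List (Fin m) × A)), RE (· ∈ 𝒞) ∧
      X = {x : G → A | ∀ (g : G) (c : List (List (Fin m) × A)), c ∈ 𝒞 → ¬ PCHolds s x g c}

/-- Word metric distance associated to a finite tuple `s` generating `G` as a monoid. -/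
noncomputable def wordDist {G : Type*} [Group G] {m : ℕ} (s : Fin m → G) (g h : G) : ℕ :=
  sInf {n : ℕ | ∃ w : List (Fin m), w.length = n ∧ (w.map s).prod = g⁻¹ * h}

/-- Two finitely generated groups are quasi-isometric (with respect to word metrics given
by some finite generating sets). -/
def QuasiIsometric (G₁ G₂ : Type*) [Group G₁] [Group G₂] : Prop :=
  ∃ (m₁ : ℕ) (s₁ : Fin m₁ → G₁) (m₂ : ℕ) (s₂ : Fin m₂ → G₂),
    Submonoid.closure (Set.range s₁) = ⊤ ∧ Submonoid.closure (Set.range s₂) = ⊤ ∧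
    ∃ (f : G₂ → G₁) (A B C : ℝ), 1 ≤ A ∧ 0 ≤ B ∧ 0 ≤ C ∧
      (∀ x y : G₂,
        (1 / A) * (wordDist s₂ x y : ℝ) - B ≤ (wordDist s₁ (f x) (f y) : ℝ) ∧
        (wordDist s₁ (f x) (f y) : ℝ) ≤ A * (wordDist s₂ x y : ℝ) + B) ∧
      ∀ z : G₁, ∃ x : G₂, (wordDist s₁ z (f x) : ℝ) ≤ C

/-- A finitely presented group: a quotient of a finitely generated free group by the
normal closure of finitely many relators. -/
def FinitelyPresentedGroup (G : Type*) [Group G] : Prop :=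
  ∃ (m : ℕ) (f : FreeGroup (Fin m) →* G) (R : Finset (FreeGroup (Fin m))),
    Function.Surjective f ∧ f.ker = Subgroup.normalClosure (R : Set (FreeGroup (Fin m)))

/-- A subgroup `Δ ≤ G` is mediated: there is a finite generating set `T` of `G` such that
`Δ ∩ tΔt⁻¹` is non-amenable for every `t ∈ T`. -/
def Mediated {G : Type*} [Group G] (Δ : Subgroup G) : Prop :=
  ∃ T : Finset G, Subgroup.closure (T : Set G) = ⊤ ∧
    ∀ t ∈ T, ¬ Amenable ↥(Δ ⊓ Subgroup.map (MulAut.conj t).toMonoidHom Δ)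

end SelfSim

/-!
Let `A ⊆ G` be almost invariant. Two configurations of an SFT on `G × ℤ` which agree on `I × ℤ`,
for a suitable finite `I ⊆ G`, can be glued along `A × ℤ` inside the SFT. An observable which
gluing cannot change is therefore determined by the restriction to `I × ℤ`, and by compactness
even by a finite window of it. So it carries at most `|B| ^ |I|` values per unit of `ℤ`, where `B`
is the alphabet.

On the other hand, let `A` separate the two ends of the axis `n ↦ a ^ n`. A configuration glued
from `z₁` and `z₂` looks like `z₁` near one end of the axis and like `z₂` near the other, so an
observable which is constant or periodic along the axis takes the same value at `z₁` and `z₂`: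
gluing cannot change it. In a subshift the periodicity is enforced by markers; in an action on
`{0,1} ^ ℕ` on which `G` acts trivially it is automatic. Both leave room for observables with
arbitrarily many values. In a free group, the reduced words starting with a given letter form such
a set `A`.
-/

namespace SelfSim

section Ends

open Filter

/-- `A` is almost invariant: every right translate of `A` differs from `A` by a finite set. Up to
finite sets, these are the clopen subsets of the space of ends of `G`. -/
def IsAlmostInvariant {G : Type*} [Group G] (A : Set G) : Prop :=
  ∀ h, ∀ᶠ g in cofinite, (g * h ∈ A ↔ g ∈ A)

theorem IsAlmostInvariant.of_closure_eq_top {G : Type*} [Group G] {A S : Set G}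
    (hS : Subgroup.closure S = ⊤) (h : ∀ s ∈ S, ∀ᶠ g in cofinite, (g * s ∈ A ↔ g ∈ A)) :
    IsAlmostInvariant A := by
  have translate {x : G} {p : G → Prop} (hp : ∀ᶠ g in cofinite, p g) :
      ∀ᶠ g in cofinite, p (g * x) :=
    (mul_left_injective x).tendsto_cofinite.eventually hp
  intro x
  have hx : x ∈ Subgroup.closure S := hS ▸ Subgroup.mem_top x
  induction hx using Subgroup.closure_induction with
  | mem s hs => exact h s hs
  | one => simp
  | mul x y _ _ ihx ihy =>
    filter_upwards [ihx, translate (x := x) ihy] with g hgx hgy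
    rw [← mul_assoc, hgy, hgx]
  | inv x _ ih =>
    filter_upwards [translate (x := x⁻¹) ih] with g hg
    rw [← hg, inv_mul_cancel_right]

theorem eq_of_periodic_of_eventuallyEq {β : Type*} {l : Filter ℤ} [l.NeBot] {P : ℤ} {f g : ℤ → β}
    (hl : ∀ n, Tendsto (fun t : ℤ => n + t * P) l l) (hf : Function.Periodic f P)
    (hg : Function.Periodic g P) (hfg : f =ᶠ[l] g) : f = g := by
  funext n
  obtain ⟨t, ht⟩ := ((hl n).eventually hfg).exists
  rwa [← smul_eq_mul, hf.zsmul t n, hg.zsmul t n] at ht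

theorem tendsto_add_mul_atTop {P : ℤ} (hP : 0 < P) (n : ℤ) :
    Tendsto (fun t : ℤ => n + t * P) atTop atTop :=
  tendsto_atTop_add_const_left atTop n (Tendsto.atTop_mul_const' hP tendsto_id)

theorem tendsto_add_mul_atBot {P : ℤ} (hP : 0 < P) (n : ℤ) :
    Tendsto (fun t : ℤ => n + t * P) atBot atBot :=
  tendsto_atBot_add_const_left atBot n (Tendsto.atBot_mul_const' hP tendsto_id)

/-- `A` is an almost invariant set separating the two ends of the axis `n ↦ a ^ n`. -/
structure SeparatesEnds {G : Type*} [Group G] (A : Set G) (a : G) : Prop where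
  isAlmostInvariant : IsAlmostInvariant A
  zpow_mem : ∀ᶠ n : ℤ in atBot, a ^ n ∈ A
  zpow_notMem : ∀ᶠ n : ℤ in atTop, a ^ n ∉ A

namespace SeparatesEnds

variable {G : Type*} [Group G] {A : Set G} {a : G}

theorem zpow_injective (h : SeparatesEnds A a) : Function.Injective fun n : ℤ => a ^ n := by
  refine injective_zpow_iff_not_isOfFinOrder.2 fun ha => ?_
  have hP : (0 : ℤ) < orderOf a := mod_cast ha.orderOf_pos
  have hper : Function.Periodic (fun n : ℤ => a ^ n ∈ A) (orderOf a) := fun n => by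
    simp only [zpow_add, zpow_natCast, pow_orderOf_eq_one, mul_one]
  have hconst (b : Prop) : Function.Periodic (fun _ : ℤ => b) (orderOf a) := fun _ => rfl
  have hbot := eq_of_periodic_of_eventuallyEq (tendsto_add_mul_atBot hP) hper (hconst True)
    (h.zpow_mem.mono fun n hn => eq_true hn)
  have htop := eq_of_periodic_of_eventuallyEq (tendsto_add_mul_atTop hP) hper (hconst False)
    (h.zpow_notMem.mono fun n hn => eq_false hn)
  exact (congrFun (hbot.symm.trans htop) 0).mp trivial

theorem zpow_mul_mem_iff (h : SeparatesEnds A a) (g : G) :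
    ∀ᶠ n : ℤ in cofinite, (a ^ n * g ∈ A ↔ a ^ n ∈ A) :=
  h.zpow_injective.tendsto_cofinite.eventually (h.isAlmostInvariant g)

theorem zpow_mul_mem (h : SeparatesEnds A a) (g : G) : ∀ᶠ n : ℤ in atBot, a ^ n * g ∈ A := by
  filter_upwards [h.zpow_mem, atBot_le_cofinite (h.zpow_mul_mem_iff g)] with n hn hiff
  exact hiff.2 hn

theorem zpow_mul_notMem (h : SeparatesEnds A a) (g : G) :
    ∀ᶠ n : ℤ in atTop, a ^ n * g ∉ A := by
  filter_upwards [h.zpow_notMem, atTop_le_cofinite (h.zpow_mul_mem_iff g)] with n hn hiff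
  exact fun hmem => hn (hiff.1 hmem)

end SeparatesEnds

end Ends

section FreeGroup

open Filter FreeGroup

variable {α : Type*} [DecidableEq α]

theorem mem_startsWith_iff_getLast?_inv {i : α} {b : Bool} {g : FreeGroup α} :
    g ∈ startsWith (i, b) ↔ g⁻¹.toWord.getLast? = some (i, !b) := by
  simp only [startsWith, Set.mem_ofPred_eq, toWord_inv, invRev, List.getLast?_reverse,
    List.head?_map, ← List.head?_eq_getElem?]
  rcases g.toWord.head? with _ | ⟨j, c⟩ <;> simp

theorem getLast?_toWord_of_mul {j : α} {g : FreeGroup α} (hg : g ≠ 1) (hg' : g ≠ (of j)⁻¹) :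
    (of j * g).toWord.getLast? = g.toWord.getLast? := by
  have hmul : (of j * g).toWord = reduce ((j, true) :: g.toWord) := by
    rw [toWord_mul, toWord_of, List.singleton_append]
  rw [hmul, reduce.cons, reduce_toWord]
  rcases hw : g.toWord with _ | ⟨x, w⟩
  · exact absurd (toWord_eq_nil_iff.1 hw) hg
  · dsimp only
    split_ifs with hx
    · have hw_ne : w ≠ [] := by
        rintro rfl
        refine hg' (toWord_injective ?_)
        simp only [hw, toWord_inv, toWord_of, invRev, hx.1]
        grind
      rw [List.getLast?_cons_of_ne_nil hw_ne]
    · exact List.getLast?_cons_cons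

theorem isAlmostInvariant_startsWith (w : α × Bool) : IsAlmostInvariant (startsWith w) := by
  have hS : Subgroup.closure (Set.range fun j : α => (of j)⁻¹) = ⊤ := by
    rw [← Set.inv_range, Subgroup.closure_inv, closure_range_of]
  refine .of_closure_eq_top hS ?_
  rintro _ ⟨j, rfl⟩
  have hfin : ({1, of j} : Set (FreeGroup α)).Finite := by simp
  filter_upwards [hfin.compl_mem_cofinite] with g hg
  simp only [Set.mem_compl_iff, Set.mem_insert_iff, Set.mem_singleton_iff, not_or] at hg
  rw [mem_startsWith_iff_getLast?_inv, mem_startsWith_iff_getLast?_inv, mul_inv_rev, inv_inv,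
    getLast?_toWord_of_mul (inv_ne_one.2 hg.1) (inv_injective.ne hg.2)]

theorem separatesEnds_startsWith (i : α) : SeparatesEnds (startsWith (i, false)) (of i) where
  isAlmostInvariant := isAlmostInvariant_startsWith _
  zpow_mem := by
    filter_upwards [eventually_lt_atBot 0] with n hn
    obtain ⟨m, rfl⟩ : ∃ m : ℕ, n = -(m + 1 : ℕ) := ⟨(-n - 1).toNat, by omega⟩
    rw [zpow_neg, zpow_natCast, mem_startsWith_iff_getLast?_inv, inv_inv, toWord_of_pow,
      List.getLast?_replicate]
    simp
  zpow_notMem := by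
    filter_upwards [eventually_ge_atTop 0] with n hn
    lift n to ℕ using hn
    rw [zpow_natCast, startsWith, Set.mem_ofPred_eq, toWord_of_pow, List.getElem?_replicate]
    split_ifs <;> simp

end FreeGroup

section Compactness

open Filter Set

/-- On `Z`, the value of `q` depends only on the coordinates in `T`. -/
def DeterminedOn {ι B β : Type*} (q : (ι → B) → β) (Z : Set (ι → B)) (T : Set ι) : Prop :=
  ∀ z ∈ Z, ∀ z' ∈ Z, EqOn z z' T → q z = q z'

theorem DeterminedOn.exists_finset {ι B β : Type*} [TopologicalSpace B] [T2Space B]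
    [TopologicalSpace β] [DiscreteTopology β] {q : (ι → B) → β} {Z : Set (ι → B)} {T : Set ι}
    (h : DeterminedOn q Z T) (hZ : IsCompact Z) (hq : ContinuousOn q Z) :
    ∃ K : Finset ι, ↑K ⊆ T ∧ DeterminedOn q Z K := by
  classical
  let pairs : Set ((ι → B) × (ι → B)) := (Z ×ˢ Z) ∩ (Prod.map q q) ⁻¹' {r | r.1 ≠ r.2}
  let agree (t : T) : Set ((ι → B) × (ι → B)) := {p | p.1 t = p.2 t}
  have hpairs : IsCompact pairs := by
    have hZZ := hZ.prod hZ
    exact hZZ.of_isClosed_subset ((hq.prodMap hq).preimage_isClosed_of_isClosed hZZ.isClosed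
      (isClosed_discrete _)) inter_subset_left
  have hagree (t : T) : IsClosed (agree t) := isClosed_eq (by fun_prop) (by fun_prop)
  have hempty : pairs ∩ ⋂ t, agree t = ∅ := by
    refine eq_empty_of_forall_notMem fun p hp => hp.1.2 ?_
    exact h _ hp.1.1.1 _ hp.1.1.2 fun t ht => mem_iInter.1 hp.2 ⟨t, ht⟩
  obtain ⟨u, hu⟩ := hpairs.elim_finite_subfamily_closed agree hagree hempty
  refine ⟨u.map (Function.Embedding.subtype _), by simp, fun z hz z' hz' hzz => ?_⟩
  by_contra hne
  refine (hu.subset ⟨⟨⟨hz, hz'⟩, hne⟩, mem_iInter₂.2 fun t ht => ?_⟩ : (z, z') ∈ ∅)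
  exact hzz (by simpa using ht)

section IsSFT

variable {Γ B : Type*} [Group Γ] {Z : Set (Γ → B)}

theorem IsSFT.shift_mem (hZ : IsSFT Z) (g : Γ) {z : Γ → B} (hz : z ∈ Z) : shift g z ∈ Z := by
  obtain ⟨F, L, h⟩ := hZ
  rw [h] at hz ⊢
  intro g'
  simpa only [shift, mul_assoc] using hz (g⁻¹ * g')

variable [TopologicalSpace B] [DiscreteTopology B]

theorem IsSFT.isClosed (hZ : IsSFT Z) : IsClosed Z := by
  obtain ⟨F, L, h⟩ := hZ
  have hZ_eq : Z = ⋂ g : Γ, (fun (x : Γ → B) (h : F) => x (g * h)) ⁻¹' L := by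
    ext x
    simp [h]
  rw [hZ_eq]
  exact isClosed_iInter fun g => (isClosed_discrete L).preimage (by fun_prop)

variable [Finite B]

theorem IsSFT.eventually_shift_eq {β ι : Type*} [TopologicalSpace β] [DiscreteTopology β]
    (hZ : IsSFT Z) {q : (Γ → B) → β} (hq : ContinuousOn q Z) {l : Filter ι} {u : ι → Γ}
    {T : Set Γ} (hT : ∀ h, ∀ᶠ i in l, u i * h ∈ T) :
    ∀ᶠ i in l, ∀ z ∈ Z, ∀ z' ∈ Z, EqOn z z' T → q (shift (u i)⁻¹ z) = q (shift (u i)⁻¹ z') := by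
  have huniv : DeterminedOn q Z univ := fun z _ z' _ h => congrArg q (eqOn_univ z z' |>.1 h)
  obtain ⟨K, -, hK⟩ := huniv.exists_finset hZ.isClosed.isCompact hq
  filter_upwards [K.eventually_all.2 fun h _ => hT h] with i hi z hz z' hz' hzz
  refine hK _ (hZ.shift_mem _ hz) _ (hZ.shift_mem _ hz') fun h hh => ?_
  simpa only [shift, inv_inv] using hzz (hi h hh)

end IsSFT

end Compactness

section Gluing

open Filter Set

variable {G H B : Type*}

open Classical in
/-- The configuration equal to `z₁` over `A` and to `z₂` over the complement of `A`. -/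
noncomputable def glue (A : Set G) (z₁ z₂ : G × H → B) : G × H → B :=
  (Prod.fst ⁻¹' A).piecewise z₁ z₂

open Classical in
theorem glue_eqOn_left (A : Set G) (z₁ z₂ : G × H → B) :
    EqOn (glue A z₁ z₂) z₁ (Prod.fst ⁻¹' A) :=
  fun _ hp => piecewise_eq_of_mem _ _ _ hp

open Classical in
theorem glue_eqOn_right (A : Set G) (z₁ z₂ : G × H → B) :
    EqOn (glue A z₁ z₂) z₂ (Prod.fst ⁻¹' A)ᶜ :=
  fun _ hp => piecewise_eq_of_notMem _ _ _ hp

variable [Group G] [Group H]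

theorem IsSFT.exists_interface {A : Set G} (hA : IsAlmostInvariant A) {Z : Set (G × H → B)}
    (hZ : IsSFT Z) :
    ∃ I : Finset G, ∀ z₁ ∈ Z, ∀ z₂ ∈ Z, EqOn z₁ z₂ (Prod.fst ⁻¹' I) → glue A z₁ z₂ ∈ Z := by
  classical
  obtain ⟨F, L, hL⟩ := hZ
  have hcross : ∀ᶠ g in cofinite, ∀ w ∈ F, (g * w.1 ∈ A ↔ g ∈ A) :=
    F.eventually_all.2 fun w _ => hA w.1
  let crossing : Finset G := (eventually_cofinite.1 hcross).toFinset
  refine ⟨Finset.image₂ (fun g (w : G × H) => g * w.1) crossing F, fun z₁ h₁ z₂ h₂ h₁₂ => ?_⟩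
  rw [hL] at h₁ h₂ ⊢
  intro p
  by_cases hp : p.1 ∈ crossing
  · convert h₂ p using 2 with w
    have hwI : (p * w).1 ∈ Finset.image₂ (fun g (w : G × H) => g * w.1) crossing F :=
      Finset.mem_image₂_of_mem hp w.2
    by_cases hw : (p * w).1 ∈ A
    · rw [glue_eqOn_left A z₁ z₂ hw, h₁₂ hwI]
    · exact glue_eqOn_right A z₁ z₂ hw
  · have hp' : ∀ w : F, ((p * w).1 ∈ A ↔ p.1 ∈ A) := by simpa [crossing] using hp
    by_cases hpA : p.1 ∈ A
    · convert h₁ p using 2 with w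
      exact glue_eqOn_left A z₁ z₂ ((hp' w).2 hpA)
    · convert h₂ p using 2 with w
      exact glue_eqOn_right A z₁ z₂ (mt (hp' w).1 hpA)

end Gluing

section Capacity

open Set

theorem le_of_forall_pow_le_pow_add {c e K : ℕ} (h : ∀ N, c ^ N ≤ e ^ (N + K)) : c ≤ e := by
  by_contra! hec
  rcases Nat.eq_zero_or_pos e with rfl | he
  · have hc : c ^ 1 ≤ 0 ^ (1 + K) := h 1
    rw [pow_one, zero_pow (by omega)] at hc
    omega
  have he' : (0 : ℝ) < e := mod_cast he
  have hratio : (1 : ℝ) < c / e := (one_lt_div he').2 (mod_cast hec)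
  obtain ⟨N, hN⟩ := pow_unbounded_of_one_lt ((e : ℝ) ^ K) hratio
  rw [div_pow, lt_div_iff₀ (pow_pos he' N), ← pow_add, add_comm] at hN
  exact (h N).not_gt (mod_cast hN)

theorem card_le_of_local_decoding {C E : Type*} [Finite E] (R : ℕ) (w : (ℤ → C) → ℤ → E)
    (hw : ∀ β β' n, (∀ m : ℤ, |m| ≤ R → w β (n + m) = w β' (n + m)) → β n = β' n) :
    Nat.card C ≤ Nat.card E := by
  rcases isEmpty_or_nonempty C with _ | ⟨⟨c⟩⟩
  · simp
  refine le_of_forall_pow_le_pow_add (K := 2 * R) fun N => ?_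
  let extend (f : Ico (0 : ℤ) N → C) : ℤ → C := Function.extend Subtype.val f fun _ => c
  let encode (f : Ico (0 : ℤ) N → C) (i : Ico (-R : ℤ) (N + R)) : E := w (extend f) i
  have hencode : Function.Injective encode := by
    intro f f' hff
    funext n
    have hn := hw (extend f) (extend f') n fun m hm =>
      congrFun hff ⟨n + m, by have := n.2.1; have := n.2.2; have := abs_le.1 hm; grind⟩
    simpa only [extend, Subtype.val_injective.extend_apply] using hn
  have hcard := Nat.card_le_card_of_injective encode hencode
  have hsource : Nat.card (Ico (0 : ℤ) N) = N := by simp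
  have htarget : Nat.card (Ico (-R : ℤ) (N + R)) = N + 2 * R := by
    simp
    omega
  rwa [Nat.card_fun, Nat.card_fun, hsource, htarget] at hcard

/-- A channel in `Z` with alphabet `C`: a `ℤ`-invariant closed set `Y ⊆ Z` and a continuous
observable `q` which gluing along `A` cannot change, whose values along a `ℤ`-orbit
can be prescribed arbitrarily. -/
structure IsChannel {G B C : Type*} [Group G] [TopologicalSpace B] [TopologicalSpace C]
    (A : Set G) (Z Y : Set (G × Multiplicative ℤ → B)) (q : (G × Multiplicative ℤ → B) → C) :
    Prop where
  subset : Y ⊆ Z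
  isClosed : IsClosed Y
  shift_mem : ∀ n, ∀ z ∈ Y, shift (1, n) z ∈ Y
  continuousOn : ContinuousOn q Y
  eq_of_glue_mem : ∀ z₁ ∈ Y, ∀ z₂ ∈ Y, glue A z₁ z₂ ∈ Z → q z₁ = q z₂
  exists_signal : ∀ β : ℤ → C, ∃ z ∈ Y, ∀ n, q (shift (1, Multiplicative.ofAdd n)⁻¹ z) = β n

variable {G B : Type*} [Group G] [TopologicalSpace B] [DiscreteTopology B] [Finite B] {A : Set G}
  {Z : Set (G × Multiplicative ℤ → B)}

theorem IsChannel.exists_window {C : Type*} [TopologicalSpace C] [DiscreteTopology C]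
    {Y : Set (G × Multiplicative ℤ → B)} {q : (G × Multiplicative ℤ → B) → C}
    (hc : IsChannel A Z Y q) {I : Finset G}
    (hI : ∀ z₁ ∈ Z, ∀ z₂ ∈ Z, EqOn z₁ z₂ (Prod.fst ⁻¹' I) → glue A z₁ z₂ ∈ Z) :
    ∃ R : ℕ, DeterminedOn q Y {p | p.1 ∈ I ∧ |p.2.toAdd| ≤ R} := by
  have hdet : DeterminedOn q Y (Prod.fst ⁻¹' I) := fun z₁ h₁ z₂ h₂ h =>
    hc.eq_of_glue_mem z₁ h₁ z₂ h₂ (hI z₁ (hc.subset h₁) z₂ (hc.subset h₂) h)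
  obtain ⟨K, hKI, hK⟩ := hdet.exists_finset hc.isClosed.isCompact hc.continuousOn
  refine ⟨K.sup fun p => p.2.toAdd.natAbs, fun z hz z' hz' h => hK z hz z' hz' fun p hp => ?_⟩
  have hle := Finset.le_sup (f := fun p : G × Multiplicative ℤ => p.2.toAdd.natAbs) hp
  exact h ⟨hKI hp, by rw [Int.abs_eq_natAbs]; exact_mod_cast hle⟩

theorem IsSFT.exists_capacity (hA : IsAlmostInvariant A) (hZ : IsSFT Z) :
    ∃ M : ℕ, ∀ {C : Type} [TopologicalSpace C] [DiscreteTopology C]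
      {Y : Set (G × Multiplicative ℤ → B)} {q : (G × Multiplicative ℤ → B) → C},
      IsChannel A Z Y q → Nat.card C ≤ M := by
  obtain ⟨I, hI⟩ := hZ.exists_interface hA
  refine ⟨Nat.card (I → B), fun {C} _ _ Y q hc => ?_⟩
  obtain ⟨R, hR⟩ := hc.exists_window hI
  choose ζ hζY hζq using hc.exists_signal
  refine card_le_of_local_decoding R (fun β n g => ζ β (g, Multiplicative.ofAdd n)) ?_
  intro β β' n hwin
  rw [← hζq β n, ← hζq β' n]
  have hY (β : ℤ → C) : shift (1, Multiplicative.ofAdd n)⁻¹ (ζ β) ∈ Y := by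
    simpa using hc.shift_mem (Multiplicative.ofAdd n)⁻¹ _ (hζY β)
  refine hR _ (hY β) _ (hY β') ?_
  rintro ⟨g, t⟩ ⟨hg, ht⟩
  simpa [shift] using congrFun (hwin t.toAdd ht) ⟨g, hg⟩

end Capacity

section Words

theorem exists_generators {Γ : Type*} [Group Γ] [Group.FG Γ] (c : Γ) :
    ∃ (m : ℕ) (s : Fin m → Γ), Submonoid.closure (Set.range s) = ⊤ ∧ ∃ i, s i = c := by
  obtain ⟨S, hS, hfin⟩ := Monoid.fg_iff.1 (inferInstance : Monoid.FG Γ)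
  obtain ⟨m, s, -, rfl⟩ := hfin.fin_param
  have hle : Submonoid.closure (Set.range s) ≤ Submonoid.closure (Set.range (Fin.cons c s)) :=
    Submonoid.closure_mono (by simp [Fin.range_cons])
  exact ⟨m + 1, Fin.cons c s, top_le_iff.1 (hS.ge.trans hle), 0, rfl⟩

theorem exists_word_prod_eq {Γ : Type*} [Group Γ] {m : ℕ} {s : Fin m → Γ}
    (hs : Submonoid.closure (Set.range s) = ⊤) (g : Γ) :
    ∃ w : List (Fin m), (w.map s).prod = g := by
  rw [← FreeMonoid.mrange_lift] at hs
  obtain ⟨w, hw⟩ := MonoidHom.mrange_eq_top.1 hs g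
  exact ⟨w.toList, by rw [← hw, FreeMonoid.lift_apply]⟩

end Words

section RecursivelyEnumerable

theorem re_exists_of_primrecRel {α β : Type*} [Primcodable α] [Primcodable β] {p : α → β → Prop}
    (hp : PrimrecRel p) : RE fun a => ∃ b, p a b := by
  classical
  let witness (a : α) (n : ℕ) : Option β :=
    (Encodable.decode n).bind fun b => Option.guard (p a ·) b
  have hguard : PrimrecRel fun (r : (α × ℕ) × β) b => p r.1.1 b :=
    hp.comp (Primrec.fst.comp (Primrec.fst.comp Primrec.fst)) Primrec.snd
  have hwitness : Primrec₂ witness :=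
    Primrec.option_bind (Primrec.decode.comp Primrec.snd)
      (Primrec.option_guard hguard Primrec.snd)
  refine (Partrec.rfindOpt hwitness.to_comp).dom_re.of_eq fun a => ?_
  rw [Nat.rfindOpt_dom]
  simp only [witness, Option.mem_def, Option.bind_eq_some_iff, Option.guard_eq_some_iff,
    decide_eq_true_eq]
  constructor
  · rintro ⟨-, -, b, -, -, hb⟩
    exact ⟨b, hb⟩
  · rintro ⟨b, hb⟩
    exact ⟨_, b, b, Encodable.encodek b, rfl, hb⟩

end RecursivelyEnumerable

section MarkerShift

open Filter Set

/-- The marker subshift: whenever the marker `2` occurs at distance `p` along the direction `c`,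
the whole configuration is `p`-periodic along `c`. -/
def markerShift {Γ : Type*} [Group Γ] (c : Γ) : Set (Γ → Fin 3) :=
  {x | ∀ u v, ∀ p : ℕ, x u = 2 → x (u * c ^ p) = 2 → x (v * c ^ p) = x v}

variable {Γ : Type*} [Group Γ]

theorem isSubshift_markerShift (c : Γ) : IsSubshift (markerShift c) := by
  constructor
  · have hinter : markerShift c = ⋂ (u) (v) (p : ℕ),
        (fun x : Γ → Fin 3 => (x u, x (u * c ^ p), x (v * c ^ p), x v)) ⁻¹'
          {r | r.1 = 2 → r.2.1 = 2 → r.2.2.1 = r.2.2.2} := by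
      ext x
      simp only [markerShift, mem_ofPred_eq, mem_iInter, mem_preimage]
    rw [hinter]
    exact isClosed_iInter fun u => isClosed_iInter fun v => isClosed_iInter fun p =>
      (isClosed_discrete _).preimage (by fun_prop)
  · intro g x hx u v p hu hup
    simp only [shift, ← mul_assoc] at hu hup ⊢
    exact hx _ _ p hu hup

/-- The pattern coding forbidden by `markerShift`: markers at `1` and `c ^ p`, where the generator
`i` stands for `c`, with letters `α` at `w` and `β` at `w c ^ p`, for `r = (p, w, α, β)`. -/
def markerCoding {m : ℕ} (i : Fin m) (r : ℕ × List (Fin m) × Fin 3 × Fin 3) :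
    List (List (Fin m) × Fin 3) :=
  [([], 2), (List.replicate r.1 i, 2), (r.2.1, r.2.2.1),
    (r.2.1 ++ List.replicate r.1 i, r.2.2.2)]

theorem primrec_markerCoding {m : ℕ} (i : Fin m) : Primrec (markerCoding i) := by
  have hreplicate : Primrec fun r : ℕ × List (Fin m) × Fin 3 × Fin 3 => List.replicate r.1 i := by
    have hmap : Primrec fun r : ℕ × List (Fin m) × Fin 3 × Fin 3 =>
        (List.range r.1).map fun _ => i :=
      Primrec.list_map (Primrec.list_range.comp Primrec.fst) (Primrec.const i).to₂
    exact hmap.of_eq fun r => by simp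
  have hw : Primrec fun r : ℕ × List (Fin m) × Fin 3 × Fin 3 => r.2.1 :=
    Primrec.fst.comp Primrec.snd
  have hα : Primrec fun r : ℕ × List (Fin m) × Fin 3 × Fin 3 => r.2.2.1 :=
    Primrec.fst.comp (Primrec.snd.comp Primrec.snd)
  have hβ : Primrec fun r : ℕ × List (Fin m) × Fin 3 × Fin 3 => r.2.2.2 :=
    Primrec.snd.comp (Primrec.snd.comp Primrec.snd)
  exact Primrec.list_cons.comp (Primrec.const ([], 2)) <|
    Primrec.list_cons.comp (hreplicate.pair (Primrec.const 2)) <|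
    Primrec.list_cons.comp (hw.pair hα) <|
    Primrec.list_cons.comp ((Primrec.list_append.comp hw hreplicate).pair hβ) (Primrec.const [])

theorem pcHolds_markerCoding_iff {m : ℕ} {s : Fin m → Γ} {i : Fin m} {x : Γ → Fin 3} {g : Γ}
    {p : ℕ} {w : List (Fin m)} {α β : Fin 3} :
    PCHolds s x g (markerCoding i (p, w, α, β)) ↔
      x g = 2 ∧ x (g * s i ^ p) = 2 ∧ x (g * (w.map s).prod) = α ∧
        x (g * (w.map s).prod * s i ^ p) = β := by
  simp [PCHolds, markerCoding, mul_assoc]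

theorem effClosedByPatterns_markerShift [Group.FG Γ] (c : Γ) :
    EffClosedByPatterns (markerShift c) := by
  obtain ⟨m, s, hs, i, rfl⟩ := exists_generators c
  refine ⟨m, s, hs, {d | ∃ r, r.2.2.1 ≠ r.2.2.2 ∧ d = markerCoding i r}, ?_, ?_⟩
  · have hα : Primrec fun q : List (List (Fin m) × Fin 3) × ℕ × List (Fin m) × Fin 3 × Fin 3 =>
        q.2.2.2.1 := Primrec.fst.comp (Primrec.snd.comp (Primrec.snd.comp Primrec.snd))
    have hβ : Primrec fun q : List (List (Fin m) × Fin 3) × ℕ × List (Fin m) × Fin 3 × Fin 3 =>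
        q.2.2.2.2 := Primrec.snd.comp (Primrec.snd.comp (Primrec.snd.comp Primrec.snd))
    exact re_exists_of_primrecRel ((Primrec.eq.comp hα hβ).not.and
      (Primrec.eq.comp Primrec.fst ((primrec_markerCoding i).comp Primrec.snd)))
  · ext x
    constructor
    · rintro hx g _ ⟨⟨p, w, α, β⟩, hne, rfl⟩ hc
      obtain ⟨hg, hgp, rfl, rfl⟩ := pcHolds_markerCoding_iff.1 hc
      exact hne (hx g _ p hg hgp).symm
    · intro hx u v p hu hup
      by_contra hne
      obtain ⟨w, hw⟩ := exists_word_prod_eq hs (u⁻¹ * v)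
      refine hx u _ ⟨(p, w, x v, x (v * s i ^ p)), Ne.symm hne, rfl⟩ ?_
      rw [pcHolds_markerCoding_iff, hw, mul_inv_cancel_left]
      exact ⟨hu, hup, rfl, rfl⟩

theorem eq_of_periodic_of_mem_markerShift {c : Γ} {P : ℕ} (hP : 0 < P) {x₁ x₂ y : Γ → Fin 3}
    (hx₁ : ∀ v, x₁ (v * c ^ P) = x₁ v) (hx₂ : ∀ v, x₂ (v * c ^ P) = x₂ v) (hmark : x₁ 1 = 2)
    (hy : y ∈ markerShift c) (hbot : ∀ᶠ n : ℤ in atBot, y (c ^ n) = x₁ (c ^ n))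
    (htop : ∀ᶠ n : ℤ in atTop, y (c ^ n) = x₂ (c ^ n)) (n : ℤ) : x₁ (c ^ n) = x₂ (c ^ n) := by
  have hP' : (0 : ℤ) < P := mod_cast hP
  have periodic_zpow {x : Γ → Fin 3} (hx : ∀ v, x (v * c ^ P) = x v) :
      Function.Periodic (fun n : ℤ => x (c ^ n)) P := fun n => by
    simp only [zpow_add, zpow_natCast, hx]
  have hmarks (t : ℤ) : x₁ (c ^ (t * P)) = 2 := by
    have h := (periodic_zpow hx₁).zsmul t 0
    simpa only [zero_add, smul_eq_mul, zpow_zero, hmark] using h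
  have hyP : ∀ v, y (v * c ^ P) = y v := by
    obtain ⟨t, ht, htP⟩ := (((tendsto_add_mul_atBot hP' 0).eventually hbot).and
      ((tendsto_add_mul_atBot hP' P).eventually hbot)).exists
    refine fun v => hy (c ^ (t * P)) v P ?_ ?_
    · rw [← hmarks t, ← zero_add (t * P : ℤ), ht]
    · rw [← zpow_natCast, ← zpow_add, add_comm, htP, ← hmarks (1 + t), add_mul, one_mul]
  have h₁ := eq_of_periodic_of_eventuallyEq (tendsto_add_mul_atBot hP') (periodic_zpow hyP)
    (periodic_zpow hx₁) hbot
  have h₂ := eq_of_periodic_of_eventuallyEq (tendsto_add_mul_atTop hP') (periodic_zpow hyP)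
    (periodic_zpow hx₂) htop
  exact congrFun (h₁.symm.trans h₂) n

end MarkerShift

section Transport

open Filter Set

variable {G H B β : Type*} [Group G] [Group H] [TopologicalSpace B] [DiscreteTopology B] [Finite B]
  [TopologicalSpace β] [DiscreteTopology β] {A : Set G} {a : G} {Z : Set (G × H → B)}
  {q : (G × H → B) → β} {z₁ z₂ : G × H → B}

theorem IsSFT.eventually_atBot_glue_eq (hZ : IsSFT Z) (h : SeparatesEnds A a)
    (hq : ContinuousOn q Z) (h₁ : z₁ ∈ Z) (hy : glue A z₁ z₂ ∈ Z) :
    ∀ᶠ n : ℤ in atBot,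
      q (shift ((a, 1) ^ n)⁻¹ (glue A z₁ z₂)) = q (shift ((a, 1) ^ n)⁻¹ z₁) := by
  have hA (p : G × H) : ∀ᶠ n : ℤ in atBot, (a, 1) ^ n * p ∈ Prod.fst ⁻¹' A := by
    simpa using h.zpow_mul_mem p.1
  filter_upwards [hZ.eventually_shift_eq hq hA] with n hn
  exact hn _ hy _ h₁ (glue_eqOn_left A z₁ z₂)

theorem IsSFT.eventually_atTop_glue_eq (hZ : IsSFT Z) (h : SeparatesEnds A a)
    (hq : ContinuousOn q Z) (h₂ : z₂ ∈ Z) (hy : glue A z₁ z₂ ∈ Z) :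
    ∀ᶠ n : ℤ in atTop,
      q (shift ((a, 1) ^ n)⁻¹ (glue A z₁ z₂)) = q (shift ((a, 1) ^ n)⁻¹ z₂) := by
  have hA (p : G × H) : ∀ᶠ n : ℤ in atTop, (a, 1) ^ n * p ∈ (Prod.fst ⁻¹' A)ᶜ := by
    simpa using h.zpow_mul_notMem p.1
  filter_upwards [hZ.eventually_shift_eq hq hA] with n hn
  exact hn _ hy _ h₂ (glue_eqOn_right A z₁ z₂)

end Transport

section PeriodicConfigurations

open Set

variable {G : Type*} [Group G] {P : ℕ}

/-- The configurations which are `P`-periodic along `a` and carry a marker at each point of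
`{1} × ℤ`. -/
def markedPeriodic (a : G) (P : ℕ) : Set (G × Multiplicative ℤ → Fin 3) :=
  {x | (∀ j, x (1, j) = 2) ∧ ∀ v, x (v * (a, 1) ^ P) = x v}

/-- The letters of `x` at the points of one period of the axis of `a` that carry no marker, with
`1` read as `true`. -/
def readAxis (a : G) (P : ℕ) (x : G × Multiplicative ℤ → Fin 3) : {r : ZMod P // r ≠ 0} → Bool :=
  fun r => decide (x ((a, 1) ^ r.1.val) = 1)

theorem isClosed_markedPeriodic (a : G) (P : ℕ) : IsClosed (markedPeriodic a P) := by
  simp only [markedPeriodic, ofPred_and, ofPred_forall]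
  exact (isClosed_iInter fun j => isClosed_eq (by fun_prop) (by fun_prop)).inter
    (isClosed_iInter fun v => isClosed_eq (by fun_prop) (by fun_prop))

theorem shift_mem_markedPeriodic {a : G} {x : G × Multiplicative ℤ → Fin 3}
    (hx : x ∈ markedPeriodic a P) (n : Multiplicative ℤ) : shift (1, n) x ∈ markedPeriodic a P := by
  refine ⟨fun j => ?_, fun v => ?_⟩
  · simpa [shift] using hx.1 (n⁻¹ * j)
  · simpa only [shift, ← mul_assoc] using hx.2 ((1, n)⁻¹ * v)

theorem continuous_readAxis (a : G) (P : ℕ) : Continuous (readAxis a P) :=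
  have hdecide : Continuous fun b : Fin 3 => decide (b = 1) := continuous_of_discreteTopology
  continuous_pi fun _ => hdecide.comp (continuous_apply _)

/-- The `P`-periodic word carrying a marker at `0` and the bits `b` at the other residues. -/
def letter (b : {r : ZMod P // r ≠ 0} → Bool) (r : ZMod P) : Fin 3 :=
  if h : r = 0 then 2 else if b ⟨r, h⟩ then 1 else 0

theorem letter_eq_two_iff {b : {r : ZMod P // r ≠ 0} → Bool} {r : ZMod P} :
    letter b r = 2 ↔ r = 0 := by
  unfold letter
  split_ifs with h <;> simp [h]

theorem decide_letter_eq_one (b : {r : ZMod P // r ≠ 0} → Bool) (r : {r : ZMod P // r ≠ 0}) :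
    decide (letter b r = 1) = b r := by
  rw [letter, dif_neg r.2]
  cases b r <;> rfl

/-- The configuration spelling, on the axis of `a` at height `j`, the periodic word given by the
bits `β j`. -/
noncomputable def axisConfig (a : G) (β : ℤ → {r : ZMod P // r ≠ 0} → Bool)
    (v : G × Multiplicative ℤ) : Fin 3 :=
  Function.extend (fun n : ℤ => a ^ n) (fun n : ℤ => letter (β v.2.toAdd) (n : ZMod P)) 0 v.1

variable {a : G} {β : ℤ → {r : ZMod P // r ≠ 0} → Bool}

theorem axisConfig_zpow (ha : Function.Injective fun n : ℤ => a ^ n) (n : ℤ)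
    (j : Multiplicative ℤ) : axisConfig a β (a ^ n, j) = letter (β j.toAdd) n :=
  ha.extend_apply _ _ n

theorem axisConfig_of_notMem_zpowers {g : G} (hg : g ∉ Subgroup.zpowers a)
    (j : Multiplicative ℤ) : axisConfig a β (g, j) = 0 :=
  Function.extend_apply' _ _ _ hg

theorem axisConfig_eq_two_iff (ha : Function.Injective fun n : ℤ => a ^ n)
    {v : G × Multiplicative ℤ} :
    axisConfig a β v = 2 ↔ ∃ n : ℤ, a ^ n = v.1 ∧ (n : ZMod P) = 0 := by
  obtain ⟨g, j⟩ := v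
  by_cases hg : g ∈ Subgroup.zpowers a
  · obtain ⟨n, rfl⟩ := hg
    simp only [axisConfig_zpow ha, letter_eq_two_iff, ha.eq_iff, exists_eq_left]
  · rw [axisConfig_of_notMem_zpowers hg]
    simp only [Fin.reduceEq, false_iff, not_exists, not_and]
    rintro n rfl
    exact absurd (Subgroup.zpow_mem_zpowers a n) hg

theorem axisConfig_mul_pow (ha : Function.Injective fun n : ℤ => a ^ n) {p : ℕ}
    (hp : (p : ZMod P) = 0) (v : G × Multiplicative ℤ) :
    axisConfig a β (v * (a, 1) ^ p) = axisConfig a β v := by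
  obtain ⟨g, j⟩ := v
  rw [Prod.pow_mk, one_pow, Prod.mk_mul_mk, mul_one]
  by_cases hg : g ∈ Subgroup.zpowers a
  · obtain ⟨n, rfl⟩ := hg
    have hstep : a ^ n * a ^ p = a ^ (n + p) := by rw [zpow_add, zpow_natCast]
    simp only [hstep, axisConfig_zpow ha, Int.cast_add, Int.cast_natCast, hp, add_zero]
  · have hgp : g * a ^ p ∉ Subgroup.zpowers a := by
      rwa [Subgroup.mul_mem_cancel_right _ (Subgroup.npow_mem_zpowers a p)]
    rw [axisConfig_of_notMem_zpowers hg, axisConfig_of_notMem_zpowers hgp]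

theorem axisConfig_mem_markerShift (ha : Function.Injective fun n : ℤ => a ^ n) :
    axisConfig a β ∈ markerShift ((a, 1) : G × Multiplicative ℤ) := by
  intro u v p hu hup
  obtain ⟨m, hm, hm0⟩ := (axisConfig_eq_two_iff ha).1 hu
  obtain ⟨n, hn, hn0⟩ := (axisConfig_eq_two_iff ha).1 hup
  have hnm : n = m + p := ha <| by
    simp only [hn, zpow_add, hm, zpow_natCast, Prod.fst_mul, Prod.pow_fst]
  rw [hnm, Int.cast_add, hm0, zero_add, Int.cast_natCast] at hn0
  exact axisConfig_mul_pow ha hn0 v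

theorem axisConfig_mem_markedPeriodic (ha : Function.Injective fun n : ℤ => a ^ n) :
    axisConfig a β ∈ markedPeriodic a P :=
  ⟨fun _ => (axisConfig_eq_two_iff ha).2 ⟨0, zpow_zero a, Int.cast_zero⟩,
    axisConfig_mul_pow ha (CharP.cast_eq_zero _ P)⟩

theorem readAxis_shift_axisConfig [NeZero P] (ha : Function.Injective fun n : ℤ => a ^ n) (n : ℤ) :
    readAxis a P (shift (1, Multiplicative.ofAdd n)⁻¹ (axisConfig a β)) = β n := by
  funext r
  have hr : ((r.1.val : ℤ) : ZMod P) = r := by simp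
  have hconfig : shift (1, Multiplicative.ofAdd n)⁻¹ (axisConfig a β) ((a, 1) ^ r.1.val) =
      letter (β n) r := by
    have h := axisConfig_zpow (β := β) ha r.1.val (Multiplicative.ofAdd n)
    rw [hr, zpow_natCast] at h
    simpa [shift] using h
  rw [readAxis, hconfig, decide_letter_eq_one]

end PeriodicConfigurations

section NotSofic

open Filter Set

variable {G B : Type*} [Group G] [TopologicalSpace B] [DiscreteTopology B] [Finite B] {A : Set G}
  {a : G} {P : ℕ} [NeZero P] {Z : Set (G × Multiplicative ℤ → B)}
  {φ : (G × Multiplicative ℤ → B) → G × Multiplicative ℤ → Fin 3}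

theorem readAxis_eq_of_glue_mem (h : SeparatesEnds A a) (hZ : IsSFT Z)
    (hφ : IsFactorMapOnto Z φ shift (markerShift (a, 1))) {z₁ z₂ : G × Multiplicative ℤ → B}
    (h₁ : z₁ ∈ Z) (h₂ : z₂ ∈ Z) (hp₁ : φ z₁ ∈ markedPeriodic a P) (hp₂ : φ z₂ ∈ markedPeriodic a P)
    (hy : glue A z₁ z₂ ∈ Z) : readAxis a P (φ z₁) = readAxis a P (φ z₂) := by
  obtain ⟨hcont, hmaps, -, hequiv⟩ := hφ
  let origin (z : G × Multiplicative ℤ → B) : Fin 3 := φ z 1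
  have horigin : ContinuousOn origin Z := (continuous_apply 1).comp_continuousOn hcont
  have happly (g) {z} (hz : z ∈ Z) : origin (shift g⁻¹ z) = φ z g := by
    simp only [origin, hequiv _ _ hz, shift, inv_inv, mul_one]
  have hbot : ∀ᶠ n : ℤ in atBot, φ (glue A z₁ z₂) ((a, 1) ^ n) = φ z₁ ((a, 1) ^ n) := by
    simpa only [happly _ hy, happly _ h₁] using hZ.eventually_atBot_glue_eq h horigin h₁ hy
  have htop : ∀ᶠ n : ℤ in atTop, φ (glue A z₁ z₂) ((a, 1) ^ n) = φ z₂ ((a, 1) ^ n) := by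
    simpa only [happly _ hy, happly _ h₂] using hZ.eventually_atTop_glue_eq h horigin h₂ hy
  have haxis := eq_of_periodic_of_mem_markerShift (NeZero.pos P) hp₁.2 hp₂.2 (hp₁.1 1)
    (hmaps hy) hbot htop
  funext r
  have hr := haxis r.1.val
  rw [zpow_natCast] at hr
  rw [readAxis, readAxis, hr]

theorem isChannel_readAxis (h : SeparatesEnds A a) (hZ : IsSFT Z)
    (hφ : IsFactorMapOnto Z φ shift (markerShift (a, 1))) :
    IsChannel A Z (Z ∩ φ ⁻¹' markedPeriodic a P) (readAxis a P ∘ φ) where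
  subset := inter_subset_left
  isClosed := hφ.1.preimage_isClosed_of_isClosed hZ.isClosed (isClosed_markedPeriodic a P)
  shift_mem n z hz := by
    refine ⟨hZ.shift_mem _ hz.1, ?_⟩
    rw [mem_preimage, hφ.2.2.2 _ _ hz.1]
    exact shift_mem_markedPeriodic hz.2 n
  continuousOn := (continuous_readAxis a P).comp_continuousOn (hφ.1.mono inter_subset_left)
  eq_of_glue_mem z₁ h₁ z₂ h₂ hy := readAxis_eq_of_glue_mem h hZ hφ h₁.1 h₂.1 h₁.2 h₂.2 hy
  exists_signal β := by
    obtain ⟨z, hz, hzβ⟩ :=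
      hφ.2.2.1 (axisConfig_mem_markerShift (β := β) h.zpow_injective)
    refine ⟨z, ⟨hz, ?_⟩, fun n => ?_⟩
    · rw [mem_preimage, hzβ]
      exact axisConfig_mem_markedPeriodic h.zpow_injective
    · rw [Function.comp_apply, hφ.2.2.2 _ _ hz, hzβ, readAxis_shift_axisConfig h.zpow_injective]

theorem not_isSofic_markerShift (h : SeparatesEnds A a) :
    ¬ IsSofic (markerShift ((a, 1) : G × Multiplicative ℤ)) := by
  rintro ⟨k, Z, φ, hZ, hφ⟩
  obtain ⟨M, hM⟩ := hZ.exists_capacity h.isAlmostInvariant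
  have hcard := hM (isChannel_readAxis (P := M + 1) h hZ hφ)
  have hresidues : Nat.card {r : ZMod (M + 1) // r ≠ 0} = M := by
    simp
  rw [Nat.card_fun, hresidues, Nat.card_eq_fintype_card, Fintype.card_bool] at hcard
  exact hcard.not_gt M.lt_two_pow_self

end NotSofic

section PermutationAction

open Set

theorem exists_forall_eq_iff_consistent {ι κ γ : Type*} [Nonempty γ] {τ : ι → κ}
    {v : ι → Option γ} :
    (∃ x : κ → γ, ∀ i, ∀ b ∈ v i, x (τ i) = b) ↔
      ∀ i j, τ i = τ j → ∀ b ∈ v i, ∀ c ∈ v j, b = c := by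
  constructor
  · rintro ⟨x, hx⟩ i j hij b hb c hc
    rw [← hx i b hb, hij, hx j c hc]
  · intro h
    have hval (k : κ) : ∃ b, ∀ i, τ i = k → ∀ c ∈ v i, b = c := by
      by_cases hk : ∃ i b, τ i = k ∧ b ∈ v i
      · obtain ⟨i, b, hi, hb⟩ := hk
        exact ⟨b, fun j hj c hc => h i j (hi.trans hj.symm) b hb c hc⟩
      · push Not at hk
        exact ⟨Classical.arbitrary γ, fun i hi c hc => absurd hc (hk i c hi)⟩
    choose x hx using hval
    exact ⟨x, fun i b hb => hx _ i rfl b hb⟩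

variable {Γ γ : Type*} [Group Γ] {m : ℕ}

/-- The action of `Γ` on `γ ^ ℕ` permuting the coordinates through `ρ`. -/
def permAct (ρ : Γ →* Equiv.Perm ℕ) (g : Γ) (x : ℕ → γ) : ℕ → γ := x ∘ ρ g⁻¹

theorem isActionOn_permAct (ρ : Γ →* Equiv.Perm ℕ) :
    IsActionOn (permAct ρ) (univ : Set (ℕ → γ)) := by
  refine ⟨fun _ _ _ => trivial, fun x _ => ?_, fun g h x _ => ?_⟩
  · simp [permAct]
  · simp [permAct, Function.comp_assoc]

theorem setRep_permAct_eq_range (ρ : Γ →* Equiv.Perm ℕ) (s : Fin m → Γ) :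
    SetRep s (permAct ρ) univ = range fun (x : ℕ → γ) n i => x (ρ (s i)⁻¹ n) := by
  ext y
  simp [SetRep, permAct, funext_iff, eq_comm, forall_comm (α := ℕ)]

/-- The letter which the word `w` over `γ ^ Fin m` prescribes for the entry `t.1` of its
coordinate `t.2`, if any. -/
def entry (w : List (Fin m → γ)) (t : Fin m × ℕ) : Option γ := w[t.2]?.map (· t.1)

theorem extendsWord_iff_entry {y : ℕ → Fin m → γ} {w : List (Fin m → γ)} :
    ExtendsWord y w ↔ ∀ t, ∀ b ∈ entry w t, y t.2 t.1 = b := by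
  constructor
  · rintro h ⟨i, n⟩ b hb
    obtain ⟨f, hf, rfl⟩ := Option.map_eq_some_iff.1 hb
    obtain ⟨hn, rfl⟩ := List.getElem?_eq_some_iff.1 hf
    exact congrFun (h ⟨n, hn⟩) i
  · intro h n
    funext i
    exact h (i, n) _ (by simp [entry])

theorem disjoint_setRep_permAct_iff [Nonempty γ] (ρ : Γ →* Equiv.Perm ℕ) (s : Fin m → Γ)
    (w : List (Fin m → γ)) :
    (∀ y, ExtendsWord y w → y ∉ SetRep s (permAct ρ) univ) ↔
      ∃ r : (Fin m × ℕ) × (Fin m × ℕ) × γ × γ,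
        ρ (s r.1.1)⁻¹ r.1.2 = ρ (s r.2.1.1)⁻¹ r.2.1.2 ∧ entry w r.1 = some r.2.2.1 ∧
          entry w r.2.1 = some r.2.2.2 ∧ r.2.2.1 ≠ r.2.2.2 := by
  have hmeet : (∃ y, ExtendsWord y w ∧ y ∈ SetRep s (permAct ρ) univ) ↔
      ∃ x : ℕ → γ, ∀ t, ∀ b ∈ entry w t, x (ρ (s t.1)⁻¹ t.2) = b := by
    simp only [setRep_permAct_eq_range, extendsWord_iff_entry]
    constructor
    · rintro ⟨_, h, x, rfl⟩
      exact ⟨x, h⟩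
    · rintro ⟨x, h⟩
      exact ⟨_, h, x, rfl⟩
  rw [exists_forall_eq_iff_consistent (τ := fun t : Fin m × ℕ => ρ (s t.1)⁻¹ t.2)] at hmeet
  rw [← not_iff_not]
  push Not
  rw [hmeet]
  exact ⟨fun h r hr hb hc => h _ _ hr _ hb _ hc,
    fun h t t' ht b hb c hc => h (t, t', b, c) ht hb hc⟩

theorem re_disjoint_setRep_permAct [Primcodable γ] [Nonempty γ] {ρ : Γ →* Equiv.Perm ℕ}
    (hρ : ∀ g, Primrec (ρ g)) (s : Fin m → Γ) :
    RE fun w : List (Fin m → γ) => ∀ y, ExtendsWord y w → y ∉ SetRep s (permAct ρ) univ := by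
  simp only [disjoint_setRep_permAct_iff]
  let Arg := List (Fin m → γ) × (Fin m × ℕ) × (Fin m × ℕ) × γ × γ
  have hw : Primrec fun q : Arg => q.1 := Primrec.fst
  have ht : Primrec fun q : Arg => q.2.1 := Primrec.fst.comp Primrec.snd
  have ht' : Primrec fun q : Arg => q.2.2.1 := Primrec.fst.comp (Primrec.snd.comp Primrec.snd)
  have hb : Primrec fun q : Arg => q.2.2.2.1 :=
    Primrec.fst.comp (Primrec.snd.comp (Primrec.snd.comp Primrec.snd))
  have hc : Primrec fun q : Arg => q.2.2.2.2 :=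
    Primrec.snd.comp (Primrec.snd.comp (Primrec.snd.comp Primrec.snd))
  have hτ : Primrec fun t : Fin m × ℕ => ρ (s t.1)⁻¹ t.2 :=
    Primrec.fin_curry₁.2 fun i => hρ (s i)⁻¹
  have hentry : Primrec₂ (entry : List (Fin m → γ) → Fin m × ℕ → Option γ) :=
    Primrec.option_map (Primrec.list_getElem?.comp Primrec.fst (Primrec.snd.comp Primrec.snd))
      (Primrec.fin_app.comp Primrec.snd (Primrec.fst.comp (Primrec.snd.comp Primrec.fst)))
  exact re_exists_of_primrecRel <|
    (Primrec.eq.comp (hτ.comp ht) (hτ.comp ht')).and <|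
    (Primrec.eq.comp (hentry.comp hw ht) (Primrec.option_some.comp hb)).and <|
    (Primrec.eq.comp (hentry.comp hw ht') (Primrec.option_some.comp hc)).and
    (Primrec.eq.comp hb hc).not

theorem isEffClosedAction_permAct [Group.FG Γ] [Primcodable γ] [Nonempty γ] [TopologicalSpace γ]
    [CompactSpace γ] [T2Space γ] {ρ : Γ →* Equiv.Perm ℕ} (hρ : ∀ g, Primrec (ρ g)) :
    IsEffClosedAction (permAct ρ) (univ : Set (ℕ → γ)) := by
  obtain ⟨m, s, hs, hone⟩ := exists_generators (1 : Γ)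
  refine ⟨m, s, isClosed_univ, isActionOn_permAct ρ, hone, hs, ?_, re_disjoint_setRep_permAct hρ s⟩
  rw [setRep_permAct_eq_range]
  exact (isCompact_range (by fun_prop)).isClosed

end PermutationAction

section Tracks

open Filter Set

theorem intEquivNat_natCast (n : ℕ) : Equiv.intEquivNat n = 2 * n := rfl

theorem intEquivNat_negSucc (n : ℕ) : Equiv.intEquivNat (Int.negSucc n) = 2 * n + 1 := rfl

theorem intEquivNat_add_one (z : ℤ) : Equiv.intEquivNat (z + 1) =
    if Equiv.intEquivNat z % 2 = 0 then Equiv.intEquivNat z + 2 else Equiv.intEquivNat z - 2 := by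
  rcases z with n | _ | n
  · rw [Int.ofNat_eq_natCast, ← Int.natCast_succ, intEquivNat_natCast, intEquivNat_natCast]
    grind
  · rfl
  · have hsucc : Int.negSucc (n + 1) + 1 = Int.negSucc n := rfl
    rw [hsucc, intEquivNat_negSucc, intEquivNat_negSucc]
    grind

theorem intEquivNat_sub_one (z : ℤ) : Equiv.intEquivNat (z - 1) =
    if Equiv.intEquivNat z % 2 = 0 then
      if Equiv.intEquivNat z = 0 then 1 else Equiv.intEquivNat z - 2
    else Equiv.intEquivNat z + 2 := by
  obtain ⟨z, rfl⟩ : ∃ u, z = u + 1 := ⟨z - 1, by ring⟩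
  rw [add_sub_cancel_right, intEquivNat_add_one]
  rcases z with n | n
  · rw [Int.ofNat_eq_natCast, intEquivNat_natCast]
    grind
  · rw [intEquivNat_negSucc]
    grind

/-- The coordinate of `{0,1} ^ ℕ` at position `n` of the `d`-th copy of `{0,1} ^ ℤ`, for the
argument `(d, n)`. -/
def track : ℕ × ℤ ≃ ℕ := ((Equiv.refl ℕ).prodCongr Equiv.intEquivNat).trans Nat.pairEquiv

/-- The simultaneous translation of all copies of `ℤ`. -/
def translateTracks : Multiplicative ℤ →* Equiv.Perm ℕ :=
  MonoidHom.mk' (fun n => track.permCongr ((Equiv.refl ℕ).prodCongr (Equiv.addRight n.toAdd)))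
    fun m n => by ext i; simp [Prod.map_def, add_comm, add_left_comm]

theorem translateTracks_apply (n : Multiplicative ℤ) (d : ℕ) (j : ℤ) :
    translateTracks n (track (d, j)) = track (d, j + n.toAdd) := by
  simp [translateTracks]

theorem primrec_translateTracks_of_primrec {n : Multiplicative ℤ} {f : ℕ → ℕ} (hf : Primrec f)
    (h : ∀ z : ℤ, Equiv.intEquivNat (z + n.toAdd) = f (Equiv.intEquivNat z)) :
    Primrec (translateTracks n) := by
  have hsnd : Primrec fun i : ℕ => i.unpair.2 := Primrec.snd.comp Primrec.unpair
  have hfst : Primrec fun i : ℕ => i.unpair.1 := Primrec.fst.comp Primrec.unpair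
  refine (Primrec₂.natPair.comp hfst (hf.comp hsnd)).of_eq fun i => ?_
  obtain ⟨⟨d, z⟩, rfl⟩ := track.surjective i
  rw [translateTracks_apply]
  simp [track, h]

theorem primrec_translateTracks (n : Multiplicative ℤ) : Primrec (translateTracks n) := by
  have hmod : PrimrecPred fun c : ℕ => c % 2 = 0 :=
    Primrec.eq.comp (Primrec.nat_mod.comp Primrec.id (Primrec.const 2)) (Primrec.const 0)
  have hadd : Primrec fun c : ℕ => c + 2 := Primrec.nat_add.comp Primrec.id (Primrec.const 2)
  have hsub : Primrec fun c : ℕ => c - 2 := Primrec.nat_sub.comp Primrec.id (Primrec.const 2)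
  have hzero : PrimrecPred fun c : ℕ => c = 0 := Primrec.eq.comp Primrec.id (Primrec.const 0)
  have hsucc : Primrec (translateTracks (Multiplicative.ofAdd 1)) :=
    primrec_translateTracks_of_primrec (Primrec.ite hmod hadd hsub) intEquivNat_add_one
  have hpred : Primrec (translateTracks (Multiplicative.ofAdd (-1))) :=
    primrec_translateTracks_of_primrec
      (Primrec.ite hmod (Primrec.ite hzero (Primrec.const 1) hsub) hadd) intEquivNat_sub_one
  induction n using Multiplicative.rec with | ofAdd n
  induction n using Int.induction_on with
  | zero => exact Primrec.id.of_eq fun i => by rw [ofAdd_zero, map_one, Equiv.Perm.one_apply, id]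
  | succ n ih =>
    rw [ofAdd_add, map_mul]
    exact ih.comp hsucc
  | pred n ih =>
    rw [sub_eq_add_neg, ofAdd_add, map_mul]
    exact ih.comp hpred

variable {G : Type*} [Group G]

/-- The action of `G × ℤ` on `{0,1} ^ ℕ` in which `G` acts trivially and `ℤ` acts as on a
product of infinitely many copies of the full shift `{0,1} ^ ℤ`. -/
def trackAct (G : Type*) [Group G] : G × Multiplicative ℤ → (ℕ → Bool) → ℕ → Bool :=
  permAct (translateTracks.comp (MonoidHom.snd G (Multiplicative ℤ)))

theorem trackAct_apply (g : G) (n : ℤ) (x : ℕ → Bool) (d : ℕ) (j : ℤ) :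
    trackAct G (g, Multiplicative.ofAdd n)⁻¹ x (track (d, j)) = x (track (d, j + n)) := by
  simp [trackAct, permAct, translateTracks_apply]

theorem isEffClosedAction_trackAct [Group.FG G] : IsEffClosedAction (trackAct G) univ :=
  isEffClosedAction_permAct (ρ := translateTracks.comp (MonoidHom.snd G _)) fun _ =>
    primrec_translateTracks _

variable {B : Type*} [TopologicalSpace B] [DiscreteTopology B] [Finite B] {A : Set G}
  {a : G} {Z : Set (G × Multiplicative ℤ → B)} {φ : (G × Multiplicative ℤ → B) → ℕ → Bool}

theorem isChannel_tracks (h : SeparatesEnds A a) (hZ : IsSFT Z)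
    (hφ : IsFactorMapOnto Z φ (trackAct G) univ) (M : ℕ) :
    IsChannel A Z Z fun z (d : Fin M) => φ z (track (d, 0)) := by
  obtain ⟨hcont, -, hsurj, hequiv⟩ := hφ
  have hq : ContinuousOn (fun z (d : Fin M) => φ z (track (d, 0))) Z :=
    (by fun_prop : Continuous fun (x : ℕ → Bool) (d : Fin M) => x (track (d, 0))).comp_continuousOn
      hcont
  have hzpow (n : ℤ) {z} (hz : z ∈ Z) (d : ℕ) :
      φ (shift ((a, 1) ^ n)⁻¹ z) (track (d, 0)) = φ z (track (d, 0)) := by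
    simpa [hequiv _ _ hz] using trackAct_apply (a ^ n) 0 (φ z) d 0
  refine ⟨subset_rfl, hZ.isClosed, fun n z hz => hZ.shift_mem _ hz, hq, ?_, fun β => ?_⟩
  · intro z₁ h₁ z₂ h₂ hy
    obtain ⟨n, hn⟩ := (hZ.eventually_atBot_glue_eq h hq h₁ hy).exists
    obtain ⟨n', hn'⟩ := (hZ.eventually_atTop_glue_eq h hq h₂ hy).exists
    simp only [hzpow _ hy, hzpow _ h₁, hzpow _ h₂] at hn hn'
    exact hn.symm.trans hn'
  · obtain ⟨z, hz, hzβ⟩ := hsurj (mem_univ fun i : ℕ =>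
      if hd : (track.symm i).1 < M then β (track.symm i).2 ⟨(track.symm i).1, hd⟩ else false)
    refine ⟨z, hz, fun n => funext fun d => ?_⟩
    rw [hequiv _ _ hz, trackAct_apply, hzβ]
    simp

theorem not_isFactorOfSFT_trackAct (h : SeparatesEnds A a) :
    ¬ IsFactorOfSFT (trackAct G) univ := by
  rintro ⟨k, Z, φ, hZ, hφ⟩
  obtain ⟨M, hM⟩ := hZ.exists_capacity h.isAlmostInvariant
  have hcard := hM (isChannel_tracks h hZ hφ M)
  rw [Nat.card_fun, Nat.card_fin, Nat.card_eq_fintype_card, Fintype.card_bool] at hcard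
  exact hcard.not_gt M.lt_two_pow_self

end Tracks

theorem freeGroup_times_int_not_selfSimulable_general {G : Type*} [Group G] [Group.FG G]
    {A : Set G} {a : G} (h : SeparatesEnds A a) :
    (∃ (k : ℕ) (X : Set (G × Multiplicative ℤ → Fin k)),
        IsSubshift X ∧ EffClosedByPatterns X ∧ ¬ IsSofic X) ∧
      ¬ SelfSimulable (G × Multiplicative ℤ) := by
  refine ⟨⟨3, markerShift (a, 1), isSubshift_markerShift _, effClosedByPatterns_markerShift _,
    not_isSofic_markerShift h⟩, fun hsim => ?_⟩
  exact not_isFactorOfSFT_trackAct h (hsim _ _ isEffClosedAction_trackAct)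

/-- For `k ≥ 1` and `Γ = F_k × ℤ`, there is a `Γ`-subshift over a finite
alphabet which is effectively closed by patterns but not sofic; in particular `F_k × ℤ`
is not self-simulable. -/
theorem freeGroup_times_int_not_selfSimulable (k : ℕ) (hk : 1 ≤ k) :
    (∃ (a : ℕ) (X : Set (FreeGroup (Fin k) × Multiplicative ℤ → Fin a)),
        IsSubshift X ∧ EffClosedByPatterns X ∧ ¬ IsSofic X) ∧
      ¬ SelfSimulable (FreeGroup (Fin k) × Multiplicative ℤ) :=
  freeGroup_times_int_not_selfSimulable_general (separatesEnds_startsWith ⟨0, hk⟩)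

end SelfSim
end

section
/- Let Γ be a finitely generated and recursively presented group which admits a normal subgroup Δ ⊴ Γ that is self-simulable (in particular Δ is finitely generated). Then Γ is self-simulable. -/
open scoped Pointwise

/-!
Since `G` is recursively presented, an effectively closed set of configurations on `G` can be coded
by words in the generators, and the code is an effectively closed action of `Δ`. Self-simulability
of `Δ` thus makes every `Δ`-invariant effectively closed set of configurations on `G` a factor of a
`Δ`-SFT.

For the full shift, counting the patterns on finite blocks shows that some finite tuple of
translations maps every finite subset of `Δ` to one at least twice as large, and Hall's theorem
turns this into two pointers, moving by such translations, that embed two copies of `Δ` into `Δ`.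
Following the pointers injectively, the infinite sequences displayed at the elements of `G` are
routed so that each element stores a single bit. A sequence displayed at a point then depends only
on finitely many bits at each element of the `Δ`-coset of that point.

The required SFT places on each coset `gΔ` a point of a `Δ`-SFT covering the simulations of the
given action, and asks by local rules that the simulations of `gΔ` and `gs⁻¹Δ` agree on these
finitely many bits. As `Δ` is normal, the agreement extends along the whole coset and forces the
displayed sequences to agree, so that they form an orbit of the action of `G`.
-/

namespace SelfSim

section RecursivelyEnumerable

variable {α β : Type*} [Primcodable α] [Primcodable β]

theorem re_iff_exists_primrecRel {p : α → Prop} :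
    RE p ↔ ∃ R : α → ℕ → Prop, PrimrecRel R ∧ ∀ a, p a ↔ ∃ k, R a k := by
  classical
  constructor
  · intro hp
    obtain ⟨c, hc⟩ := Nat.Partrec.Code.exists_code.1 hp
    have hevaln : Primrec fun x : α × ℕ => c.evaln x.2 (Encodable.encode x.1) :=
      Nat.Partrec.Code.primrec_evaln.comp
        ((Primrec.snd.pair (Primrec.const c)).pair (Primrec.encode.comp Primrec.fst))
    refine ⟨fun a k => (c.evaln k (Encodable.encode a)).isSome = true,
      Primrec.eq.comp (Primrec.option_isSome.comp hevaln) (Primrec.const true), fun a => ?_⟩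
    have hdom : (c.eval (Encodable.encode a)).Dom ↔ p a := by
      rw [hc]
      simp [Part.assert, Part.bind]
    rw [← hdom, Part.dom_iff_mem]
    simp only [Nat.Partrec.Code.evaln_complete, Option.isSome_iff_exists]
    exact exists_comm
  · rintro ⟨R, hR, hp⟩
    have hsearch : Partrec₂ fun (a : α) (k : ℕ) => Part.some (decide (R a k)) :=
      (PrimrecRel.decide hR).to_comp.partrec
    refine (Partrec.dom_re (Partrec.rfind hsearch)).of_eq fun a => ?_
    rw [hp]
    exact (Nat.rfind_dom (p := fun k => Part.some (decide (R a k)))).trans (by simp)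

theorem RE.of_primrecPred {p : α → Prop} (hp : PrimrecPred p) : RE p :=
  re_iff_exists_primrecRel.2 ⟨fun a _ => p a, hp.comp Primrec.fst, fun _ => by simp⟩

theorem RE.const_true : RE fun _ : α => True :=
  .of_primrecPred ⟨inferInstance, .const _⟩

theorem RE.of_iff {p q : α → Prop} (hp : RE p) (h : ∀ a, p a ↔ q a) : RE q :=
  REPred.of_eq hp h

theorem RE.comp {p : β → Prop} (hp : RE p) {f : α → β} (hf : Primrec f) :
    RE fun a => p (f a) :=
  Partrec.comp hp hf.to_comp

theorem RE.or {p q : α → Prop} (hp : RE p) (hq : RE q) : RE fun a => p a ∨ q a := by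
  obtain ⟨R, hR, hp⟩ := re_iff_exists_primrecRel.1 hp
  obtain ⟨S, hS, hq⟩ := re_iff_exists_primrecRel.1 hq
  exact re_iff_exists_primrecRel.2
    ⟨fun a k => R a k ∨ S a k, PrimrecPred.or hR hS, fun a => by rw [hp, hq, exists_or]⟩

theorem RE.exists {p : α → β → Prop} (hp : RE fun x : α × β => p x.1 x.2) :
    RE fun a => ∃ b, p a b := by
  classical
  obtain ⟨R, hR, hp⟩ := re_iff_exists_primrecRel.1 hp
  -- a witness `b` and a bound `k` for it are searched for together, as one number
  refine re_iff_exists_primrecRel.2 ⟨fun a n =>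
    (Option.casesOn (Encodable.decode (α := β) n.unpair.1) false
      (fun b => decide (R (a, b) n.unpair.2)) : Bool) = true, ?_, fun a => ?_⟩
  · have hunpair : Primrec fun x : α × ℕ => x.2.unpair := Primrec.unpair.comp Primrec.snd
    refine Primrec.eq.comp (Primrec.option_casesOn
      (Primrec.decode.comp (Primrec.fst.comp hunpair)) (Primrec.const false) ?_)
      (Primrec.const true)
    exact (PrimrecRel.decide hR).comp ((Primrec.fst.comp Primrec.fst).pair Primrec.snd)
      (Primrec.snd.comp (hunpair.comp Primrec.fst))
  · constructor
    · rintro ⟨b, hb⟩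
      obtain ⟨k, hk⟩ := (hp (a, b)).1 hb
      exact ⟨Nat.pair (Encodable.encode b) k, by simpa using hk⟩
    · rintro ⟨n, hn⟩
      revert hn
      cases Encodable.decode (α := β) n.unpair.1 with
      | none => simp
      | some b => exact fun hn => ⟨b, (hp (a, b)).2 ⟨_, by simpa using hn⟩⟩

theorem RE.and {p q : α → Prop} (hp : RE p) (hq : RE q) : RE fun a => p a ∧ q a := by
  obtain ⟨R, hR, hp⟩ := re_iff_exists_primrecRel.1 hp
  obtain ⟨S, hS, hq⟩ := re_iff_exists_primrecRel.1 hq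
  have hRS : RE fun x : α × ℕ × ℕ => R x.1 x.2.1 ∧ S x.1 x.2.2 :=
    .of_primrecPred (PrimrecPred.and (hR.comp Primrec.fst (Primrec.fst.comp Primrec.snd))
      (hS.comp Primrec.fst (Primrec.snd.comp Primrec.snd)))
  refine (RE.exists (p := fun a (x : ℕ × ℕ) => R a x.1 ∧ S a x.2) hRS).of_iff fun a => ?_
  rw [hp, hq, Prod.exists, exists_and_exists_comm]

theorem RE.forall_lt {p : ℕ → α → Prop} (hp : RE fun x : ℕ × α => p x.1 x.2) :
    RE fun x : ℕ × α => ∀ i < x.1, p i x.2 := by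
  obtain ⟨R, hR, hp⟩ := re_iff_exists_primrecRel.1 hp
  have hbdd : PrimrecRel fun (i : ℕ) (y : α × ℕ) => ∃ k < y.2, R (i, y.1) k := by
    have hswap : PrimrecRel fun (k : ℕ) (x : ℕ × α) => R x k :=
      hR.comp Primrec.snd Primrec.fst
    exact (hswap.exists_mem_list.comp (Primrec.list_range.comp (Primrec.snd.comp Primrec.snd))
      (Primrec.fst.pair (Primrec.fst.comp Primrec.snd))).of_eq fun x => by
        simp only [List.mem_range]
  have hall : PrimrecRel fun (x : ℕ × α) (K : ℕ) => ∀ i < x.1, ∃ k < K, R (i, x.2) k :=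
    (hbdd.forall_mem_list.comp (Primrec.list_range.comp (Primrec.fst.comp Primrec.fst))
      ((Primrec.snd.comp Primrec.fst).pair Primrec.snd)).of_eq fun x => by
        simp only [List.mem_range]
  refine re_iff_exists_primrecRel.2 ⟨_, hall, fun x => ?_⟩
  constructor
  · intro hx
    choose! k hk using fun i hi => (hp (i, x.2)).1 (hx i hi)
    exact ⟨(Finset.range x.1).sup k + 1, fun i hi =>
      ⟨k i, Nat.lt_succ_of_le (Finset.le_sup (Finset.mem_range.2 hi)), hk i hi⟩⟩
  · rintro ⟨K, hK⟩ i hi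
    obtain ⟨k, -, hk⟩ := hK i hi
    exact (hp (i, x.2)).2 ⟨k, hk⟩

theorem RE.image {p : α → Prop} (hp : RE p) {f : α → β} (hf : Primrec f) :
    RE fun b => ∃ a, p a ∧ f a = b := by
  classical
  exact RE.exists ((hp.comp Primrec.snd).and
    (.of_primrecPred (Primrec.eq.comp (hf.comp Primrec.snd) Primrec.fst)))

end RecursivelyEnumerable

theorem primrec_two_pow : Primrec fun n : ℕ => 2 ^ n := by
  have hrec : Primrec fun n : ℕ => (Nat.rec 1 (fun _ y => y * 2) n : ℕ) :=
    Primrec.nat_rec₁ 1 (Primrec.nat_mul.comp Primrec.snd (Primrec.const 2))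
  refine hrec.of_eq fun n => ?_
  induction n with
  | zero => rfl
  | succ n ih => simp only [pow_succ, ← ih]

theorem primrec_testBit : Primrec₂ Nat.testBit := by
  have hmod : PrimrecRel fun k j : ℕ => k / 2 ^ j % 2 = 1 :=
    Primrec.eq.comp (Primrec.nat_mod.comp (Primrec.nat_div.comp Primrec.fst
      (primrec_two_pow.comp Primrec.snd)) (Primrec.const 2)) (Primrec.const 1)
  exact (PrimrecRel.decide hmod).of_eq fun k j => Nat.testBit_eq_decide_div_mod_eq.symm

section EffectivelyClosed

variable {I : Type*}

/-- `c : I → Bool` agrees with the finite partial assignment `l`, encoded as the list of the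
prescribed pairs (index, value). -/
def Satisfies (c : I → Bool) (l : List (I × Bool)) : Prop := ∀ p ∈ l, c p.1 = p.2

theorem isClopen_setOf_satisfies (l : List (I × Bool)) : IsClopen {c | Satisfies c l} := by
  classical
  have hinter : {c | Satisfies c l} = ⋂ p ∈ l.toFinset, (fun c : I → Bool => c p.1) ⁻¹' {p.2} := by
    ext c
    simp [Satisfies]
  rw [hinter]
  exact isClopen_biInter_finset fun p _ => (isClopen_discrete _).preimage (continuous_apply p.1)

variable [Primcodable I]

/-- Compactness of `I → Bool`; the number `k < 2 ^ N` codes the restriction of a point to the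
indices whose code is less than `N`. -/
theorem forall_exists_satisfies_iff {F : List (I × Bool) → Prop} :
    (∀ c : I → Bool, ∃ f, F f ∧ Satisfies c f) ↔
      ∃ N, ∀ k < 2 ^ N, ∃ f, F f ∧
        ∀ p ∈ f, Encodable.encode p.1 < N ∧ k.testBit (Encodable.encode p.1) = p.2 := by
  classical
  constructor
  · intro hcover
    obtain ⟨T, hT⟩ := isCompact_univ.elim_finite_subcover
      (fun f : {f // F f} => {c : I → Bool | Satisfies c f})
      (fun f => (isClopen_setOf_satisfies f.1).isOpen) fun c _ => by
        obtain ⟨f, hf, hc⟩ := hcover c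
        exact Set.mem_iUnion.2 ⟨⟨f, hf⟩, hc⟩
    obtain ⟨N, hN⟩ := Finset.exists_nat_subset_range
      (T.biUnion fun f => f.1.toFinset.image fun p => Encodable.encode p.1)
    refine ⟨N, fun k _ => ?_⟩
    obtain ⟨f, hfT, hf⟩ :=
      Set.mem_iUnion₂.1 (hT (Set.mem_univ fun i => k.testBit (Encodable.encode i)))
    refine ⟨f, f.2, fun p hp => ⟨Finset.mem_range.1 (hN ?_), hf p hp⟩⟩
    exact Finset.mem_biUnion.2 ⟨f, hfT, Finset.mem_image_of_mem _ (List.mem_toFinset.2 hp)⟩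
  · rintro ⟨N, hN⟩ c
    obtain ⟨f, hf, hbits⟩ := hN (Nat.ofBits fun j : Fin N =>
      ((Encodable.decode (α := I) j).map c).getD false) (Nat.ofBits_lt_two_pow _)
    refine ⟨f, hf, fun p hp => ?_⟩
    obtain ⟨hlt, hbit⟩ := hbits p hp
    rw [Nat.testBit_ofBits_lt _ _ hlt] at hbit
    simpa using hbit

theorem RE.forall_exists_satisfies {α : Type*} [Primcodable α]
    {F : α → List (I × Bool) → Prop} (hF : RE fun x : α × List (I × Bool) => F x.1 x.2) :
    RE fun a => ∀ c : I → Bool, ∃ f, F a f ∧ Satisfies c f := by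
  have hmatch : PrimrecRel fun (f : List (I × Bool)) (y : ℕ × ℕ) =>
      ∀ p ∈ f, Encodable.encode p.1 < y.2 ∧ y.1.testBit (Encodable.encode p.1) = p.2 := by
    have hcode : Primrec fun x : (I × Bool) × ℕ × ℕ => Encodable.encode x.1.1 :=
      Primrec.encode.comp (Primrec.fst.comp Primrec.fst)
    have hpair : PrimrecRel fun (p : I × Bool) (y : ℕ × ℕ) =>
        Encodable.encode p.1 < y.2 ∧ y.1.testBit (Encodable.encode p.1) = p.2 :=
      PrimrecPred.and (Primrec.nat_lt.comp hcode (Primrec.snd.comp Primrec.snd))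
        (Primrec.eq.comp (primrec_testBit.comp (Primrec.fst.comp Primrec.snd) hcode)
          (Primrec.snd.comp Primrec.fst))
    exact hpair.forall_mem_list
  have hexists : RE fun x : ℕ × α × ℕ => ∃ f, F x.2.1 f ∧
      ∀ p ∈ f, Encodable.encode p.1 < x.2.2 ∧ x.1.testBit (Encodable.encode p.1) = p.2 := by
    have hbits : Primrec fun x : (ℕ × α × ℕ) × List (I × Bool) => (x.1.1, x.1.2.2) :=
      (Primrec.fst.pair (Primrec.snd.comp Primrec.snd)).comp Primrec.fst
    exact RE.exists ((hF.comp ((Primrec.fst.comp (Primrec.snd.comp Primrec.fst)).pair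
      Primrec.snd)).and (.of_primrecPred (hmatch.comp Primrec.snd hbits)))
  have hbounded := (RE.forall_lt (p := fun k y => ∃ f, F y.1 f ∧ ∀ p ∈ f,
    Encodable.encode p.1 < y.2 ∧ k.testBit (Encodable.encode p.1) = p.2) hexists).comp
      ((primrec_two_pow.comp Primrec.snd).pair (Primrec.id (α := α × ℕ)))
  exact hbounded.exists.of_iff fun _ => forall_exists_satisfies_iff.symm

/-- An effectively closed subset of `I → Bool`: the points that satisfy none of the members of
some recursively enumerable family of finite partial assignments. -/
def IsEffClosed (Z : Set (I → Bool)) : Prop :=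
  ∃ F : List (I × Bool) → Prop, RE F ∧ Z = {c | ∀ f, F f → ¬ Satisfies c f}

theorem IsEffClosed.isClosed {Z : Set (I → Bool)} (hZ : IsEffClosed Z) : IsClosed Z := by
  obtain ⟨F, -, rfl⟩ := hZ
  simp only [Set.ofPred_forall]
  exact isClosed_iInter fun f => isClosed_iInter fun _ =>
    (isClopen_setOf_satisfies f).compl.isClosed

theorem IsEffClosed.inter {Z Z' : Set (I → Bool)} (hZ : IsEffClosed Z) (hZ' : IsEffClosed Z') :
    IsEffClosed (Z ∩ Z') := by
  obtain ⟨F, hF, rfl⟩ := hZ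
  obtain ⟨F', hF', rfl⟩ := hZ'
  refine ⟨_, hF.or hF', ?_⟩
  ext c
  simp only [Set.mem_inter_iff, Set.mem_ofPred_eq, or_imp, forall_and]

theorem IsEffClosed.re_forall_not_satisfies {Z : Set (I → Bool)} (hZ : IsEffClosed Z) :
    RE fun l => ∀ c ∈ Z, ¬ Satisfies c l := by
  classical
  obtain ⟨F, hF, rfl⟩ := hZ
  have hneg : PrimrecRel fun (l f : List (I × Bool)) => ∃ p ∈ l, f = [(p.1, !p.2)] := by
    have hsingle : PrimrecRel fun (p : I × Bool) (f : List (I × Bool)) => f = [(p.1, !p.2)] :=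
      Primrec.eq.comp Primrec.snd (Primrec.list_cons.comp
        ((Primrec.fst.comp Primrec.fst).pair (Primrec.not.comp (Primrec.snd.comp Primrec.fst)))
        (Primrec.const []))
    exact hsingle.exists_mem_list
  -- `l` is refuted when every point satisfies a member of `F` or the negation of an entry of `l`
  refine (RE.forall_exists_satisfies (F := fun l f => F f ∨ ∃ p ∈ l, f = [(p.1, !p.2)])
    ((hF.comp Primrec.snd).or (.of_primrecPred
      (p := fun x : List (I × Bool) × List (I × Bool) => ∃ p ∈ x.1, x.2 = [(p.1, !p.2)])
      hneg))).of_iff fun l => forall_congr' fun c => ?_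
  have hnot : ¬ Satisfies c l ↔ ∃ p ∈ l, Satisfies c [(p.1, !p.2)] := by
    simp only [Satisfies, List.forall_mem_singleton, not_forall, exists_prop, Bool.eq_not,
      ne_eq]
  simp only [or_and_right, exists_or, Set.mem_ofPred_eq, hnot]
  grind

section Rules

variable {α : Type*} [Primcodable α]

theorem isEffClosed_setOf_forall_not_satisfies {p : α → Prop} (hp : RE p)
    {l : α → List (I × Bool)} (hl : Primrec l) :
    IsEffClosed {c | ∀ a, p a → ¬ Satisfies c (l a)} :=
  ⟨_, hp.image hl, by ext c; simp [and_imp]⟩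

theorem isEffClosed_setOf_forall_satisfies_imp_eq {p : α → Prop} (hp : RE p)
    {l : α → List (I × Bool)} (hl : Primrec l) {i j : α → I} (hi : Primrec i) (hj : Primrec j) :
    IsEffClosed {c | ∀ a, p a → Satisfies c (l a) → c (i a) = c (j a)} := by
  have hrule : Primrec fun x : α × Bool => (i x.1, x.2) :: (j x.1, !x.2) :: l x.1 :=
    Primrec.list_cons.comp ((hi.comp Primrec.fst).pair Primrec.snd)
      (Primrec.list_cons.comp ((hj.comp Primrec.fst).pair (Primrec.not.comp Primrec.snd))
        (hl.comp Primrec.fst))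
  convert isEffClosed_setOf_forall_not_satisfies (hp.comp Primrec.fst) hrule using 1
  ext c
  simp only [Set.mem_ofPred_eq, Satisfies, List.forall_mem_cons, Prod.forall]
  refine forall_congr' fun a => ?_
  cases c (i a) <;> cases c (j a) <;> simp

end Rules

end EffectivelyClosed

section Words

variable {I : Type*} {r : ℕ}

/-- The partial assignment under which the entries of a point at the indices `ι (n, i)`, read as
a sequence over the alphabet `Fin r → Bool`, begin with the word `v`. -/
def assign (ι : ℕ × Fin r → I) (v : List (Fin r → Bool)) : List (I × Bool) :=
  (List.range v.length).flatMap fun n =>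
    (List.finRange r).map fun i => (ι (n, i), v.getD n (fun _ => false) i)

theorem satisfies_assign_iff {ι : ℕ × Fin r → I} {v : List (Fin r → Bool)} {c : I → Bool} :
    Satisfies c (assign ι v) ↔ ExtendsWord (fun n i => c (ι (n, i))) v := by
  simp only [Satisfies, assign, ExtendsWord, List.mem_flatMap, List.mem_range, List.mem_map,
    List.mem_finRange, true_and, funext_iff]
  constructor
  · intro h n i
    simpa using h _ ⟨n, n.2, i, rfl⟩
  · rintro h _ ⟨n, hn, i, rfl⟩
    simpa only [List.getD_eq_getElem _ _ hn, List.get_eq_getElem] using h ⟨n, hn⟩ i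

theorem primrec_assign {α : Type*} [Primcodable α] [Primcodable I] {ι : α → ℕ × Fin r → I}
    (hι : Primrec₂ ι) : Primrec₂ fun a v => assign (ι a) v := by
  have hentry : Primrec fun x : ((α × List (Fin r → Bool)) × ℕ) × Fin r =>
      (ι x.1.1.1 (x.1.2, x.2), x.1.1.2.getD x.1.2 (fun _ => false) x.2) :=
    .pair (hι.comp (Primrec.fst.comp (Primrec.fst.comp Primrec.fst))
        ((Primrec.snd.comp Primrec.fst).pair Primrec.snd))
      (Primrec.fin_app.comp ((Primrec.list_getD fun _ => false).comp
        (Primrec.snd.comp (Primrec.fst.comp Primrec.fst)) (Primrec.snd.comp Primrec.fst))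
        Primrec.snd)
  have hrow : Primrec fun x : (α × List (Fin r → Bool)) × ℕ => (List.finRange r).map fun i =>
      (ι x.1.1 (x.2, i), x.1.2.getD x.2 (fun _ => false) i) :=
    Primrec.list_map (Primrec.const _) hentry
  exact Primrec.list_flatMap
    (Primrec.list_range.comp (Primrec.list_length.comp Primrec.snd)) hrow

theorem exists_extendsWord_of_notMem {A : Type*} [TopologicalSpace A] [DiscreteTopology A]
    {Y : Set (ℕ → A)} (hY : IsClosed Y) {y : ℕ → A} (hy : y ∉ Y) :
    ∃ v, ExtendsWord y v ∧ ∀ x, ExtendsWord x v → x ∉ Y := by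
  obtain ⟨_, ⟨z, N, rfl⟩, hyz, hzY⟩ := (PiNat.isTopologicalBasis_cylinders
    fun _ : ℕ => A).exists_subset_of_mem_open (Set.mem_compl hy) hY.isOpen_compl
  refine ⟨List.ofFn fun i : Fin N => z i, fun i => ?_, fun x hx => hzY fun i hi => ?_⟩
  · simpa using hyz i (by simpa using i.2)
  · simpa using hx ⟨i, by simpa using hi⟩

variable [Primcodable I]

theorem EffectivelyClosedSet.isEffClosed_reindex {α : Type*} [Primcodable α]
    {Y : Set (ℕ → Fin r → Bool)} (hY : EffectivelyClosedSet Y) {ι : α → ℕ × Fin r → I}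
    (hι : Primrec₂ ι) : IsEffClosed {c : I → Bool | ∀ a, (fun n i => c (ι a (n, i))) ∈ Y} := by
  convert isEffClosed_setOf_forall_not_satisfies
    (p := fun a : α × List (Fin r → Bool) => ∀ y, ExtendsWord y a.2 → y ∉ Y)
    (hY.2.comp Primrec.snd) (primrec_assign hι) using 1
  ext c
  simp only [Set.mem_ofPred_eq, Prod.forall, satisfies_assign_iff]
  constructor
  · exact fun hc a v hv hcv => hv _ hcv (hc a)
  · intro hc a
    by_contra hmem
    obtain ⟨v, hcv, hv⟩ := exists_extendsWord_of_notMem hY.1 hmem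
    exact hc a v hv hcv

theorem IsEffClosed.effectivelyClosedSet_image {Z : Set (I → Bool)} (hZ : IsEffClosed Z)
    {ι : ℕ × Fin r → I} (hι : Primrec ι) :
    EffectivelyClosedSet ((fun (c : I → Bool) n i => c (ι (n, i))) '' Z) := by
  constructor
  · exact (hZ.isClosed.isCompact.image (by fun_prop)).isClosed
  · have hassign : Primrec (assign (I := I) ι) :=
      (primrec_assign (ι := fun _ : Unit => ι) (hι.comp Primrec.snd)).comp
        (Primrec.const ()) Primrec.id
    refine (hZ.re_forall_not_satisfies.comp hassign).of_iff fun v => ?_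
    simp only [satisfies_assign_iff]
    exact ⟨fun h _ hv ⟨c, hc, hcx⟩ => h c hc (by simpa only [← hcx] using hv),
      fun h c hc hv => h _ hv (Set.mem_image_of_mem _ hc)⟩

end Words

section Reindex

theorem exists_fin_generators (Δ : Type*) [Group Δ] [Group.FG Δ] :
    ∃ (r : ℕ) (d : Fin r → Δ), (∃ i, d i = 1) ∧ Submonoid.closure (Set.range d) = ⊤ := by
  classical
  obtain ⟨S, hS⟩ := Monoid.fg_def.1 (Group.fg_iff_monoid_fg.1 ‹Group.FG Δ›)
  refine ⟨_, fun i => ((insert 1 S).equivFin.symm i : Δ),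
    ⟨(insert 1 S).equivFin ⟨1, Finset.mem_insert_self _ _⟩, by simp⟩, ?_⟩
  have hrange : Set.range (fun i => ((insert 1 S).equivFin.symm i : Δ)) = ↑(insert 1 S) := by
    rw [Set.range_comp' Subtype.val, Equiv.range_eq_univ, Set.image_univ, Subtype.range_coe]
  rw [hrange, eq_top_iff, ← hS]
  exact Submonoid.closure_mono (Finset.coe_subset.2 (Finset.subset_insert _ _))

theorem IsFactorMapOnto.comp {G A β γ : Type*} [Group G] [TopologicalSpace A]
    [TopologicalSpace β] [TopologicalSpace γ] {Z : Set (G → A)} {φ : (G → A) → β}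
    {act : G → β → β} {Y : Set β} (hφ : IsFactorMapOnto Z φ act Y) {ψ : β → γ}
    {act' : G → γ → γ} (hψ : ContinuousOn ψ Y)
    (hact : ∀ g, ∀ y ∈ Y, ψ (act g y) = act' g (ψ y)) :
    IsFactorMapOnto Z (ψ ∘ φ) act' (ψ '' Y) := by
  obtain ⟨hcont, hmaps, hsurj, hequiv⟩ := hφ
  refine ⟨hψ.comp hcont hmaps, (Set.mapsTo_image ψ Y).comp hmaps,
    (Set.surjOn_image ψ Y).comp hsurj, fun g z hz => ?_⟩
  rw [Function.comp_apply, hequiv g z hz, hact g _ (hmaps hz), Function.comp_apply]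

theorem primrec_uncurry_of_forall_fin {α β : Type*} [Primcodable α] [Primcodable β] {r : ℕ}
    {f : Fin r → α → β} (hf : ∀ i, Primrec (f i)) : Primrec fun x : α × Fin r => f x.2 x.1 :=
  (Primrec.vector_get.comp ((Primrec.vector_ofFn hf).comp Primrec.fst) Primrec.snd).of_eq
    fun x => by simp

theorem SelfSimulable.exists_factorMap_of_reindex {Δ : Type*} [Group Δ] [Group.FG Δ]
    (hΔ : SelfSimulable Δ) {I : Type*} [Primcodable I] [Nonempty I] {Z : Set (I → Bool)}
    (hZ : IsEffClosed Z) {ρ : Δ → I → I} (hρ : ∀ δ, Primrec (ρ δ))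
    (hact : IsActionOn (fun δ c => c ∘ ρ δ) Z) :
    ∃ (k : ℕ) (W : Set (Δ → Fin k)) (φ : (Δ → Fin k) → I → Bool),
      IsSFT W ∧ IsFactorMapOnto W φ (fun δ c => c ∘ ρ δ) Z := by
  obtain ⟨r, d, hone, hd⟩ := exists_fin_generators Δ
  let π : ℕ → I := fun n => (Encodable.decode n).getD (Classical.arbitrary I)
  have hπ : Primrec π := Primrec.option_getD.comp Primrec.decode (Primrec.const _)
  have hπe : ∀ c : I → Bool, (c ∘ π) ∘ Encodable.encode = c := fun c => by
    funext i
    simp only [π, Function.comp_apply, Encodable.encodek, Option.getD_some]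
  let act : Δ → (ℕ → Bool) → ℕ → Bool := fun δ y => (y ∘ Encodable.encode) ∘ ρ δ ∘ π
  have hactπ : ∀ δ c, act δ (c ∘ π) = (c ∘ ρ δ) ∘ π := fun δ c => by
    simp only [act, hπe, ← Function.comp_assoc]
  have hrep : SetRep d act ((· ∘ π) '' Z) =
      (fun (c : I → Bool) n i => c (ρ (d i) (π n))) '' Z := by
    ext y
    simp only [SetRep, Set.exists_mem_image, hactπ, Set.mem_ofPred_eq]
    simp only [Set.mem_image, funext_iff, Function.comp_apply]
    exact exists_congr fun c => and_congr_right fun _ =>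
      ⟨fun h n i => (h i n).symm, fun h i n => (h n i).symm⟩
  have heff : IsEffClosedAction act ((· ∘ π) '' Z) := by
    refine ⟨r, d, (hZ.isClosed.isCompact.image (by fun_prop)).isClosed, ⟨?_, ?_, ?_⟩, hone, hd, ?_⟩
    · rintro δ _ ⟨c, hc, rfl⟩
      exact ⟨c ∘ ρ δ, hact.1 δ hc, (hactπ δ c).symm⟩
    · rintro _ ⟨c, hc, rfl⟩
      simp only [hactπ, hact.2.1 c hc]
    · rintro g h _ ⟨c, hc, rfl⟩
      simp only [hactπ, hact.2.2 g h c hc]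
    · rw [hrep]
      exact hZ.effectivelyClosedSet_image (ι := fun x => ρ (d x.2) (π x.1))
        ((primrec_uncurry_of_forall_fin fun i => hρ (d i)).comp
          ((hπ.comp Primrec.fst).pair Primrec.snd))
  obtain ⟨k, W, φ, hW, hφ⟩ := hΔ _ _ heff
  refine ⟨k, W, (· ∘ Encodable.encode) ∘ φ, hW, ?_⟩
  have := hφ.comp (ψ := (· ∘ Encodable.encode)) (act' := fun δ c => c ∘ ρ δ)
    (Continuous.continuousOn (by fun_prop)) (by
      rintro δ _ ⟨c, -, rfl⟩
      simp only [hactπ, hπe])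
  rwa [Set.image_image, Set.image_congr fun c _ => hπe c, Set.image_id'] at this

end Reindex

section Cover

variable {G : Type*} [Group G] {A : Type*}

theorem shift_one (x : G → A) : shift 1 x = x := by
  funext h
  simp only [shift, inv_one, one_mul]

theorem shift_mul (g h : G) (x : G → A) : shift (g * h) x = shift g (shift h x) := by
  funext k
  simp only [shift, mul_inv_rev, mul_assoc]

variable {m : ℕ} (u : Fin m → G)

/-- The element of `G` spelled by the word `w` in the tuple `u`. -/
def wordEval (w : List (Fin m)) : G := (w.map u).prod

theorem wordEval_append (w w' : List (Fin m)) :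
    wordEval u (w ++ w') = wordEval u w * wordEval u w' := by
  simp only [wordEval, List.map_append, List.prod_append]

variable {u}

theorem surjective_wordEval (hu : Submonoid.closure (Set.range u) = ⊤) :
    Function.Surjective (wordEval u) := fun g => by
  obtain ⟨l, hl, hg⟩ := Submonoid.exists_list_of_mem_closure (hu ▸ Submonoid.mem_top g)
  obtain ⟨w, rfl⟩ := (Set.range_list_map u).ge hl
  exact ⟨w, hg⟩

theorem re_wordEval_eq (hu : Function.Surjective (wordEval u))
    (hwp : RE fun w => wordEval u w = 1) :
    RE fun x : List (Fin m) × List (Fin m) => wordEval u x.1 = wordEval u x.2 := by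
  choose inv hinv using fun i => hu (u i)⁻¹
  have hflat : ∀ w : List (Fin m), wordEval u (w.reverse.flatMap inv) = (wordEval u w)⁻¹ := by
    intro w
    induction w with
    | nil => simp [wordEval]
    | cons i w ih =>
      rw [List.reverse_cons, List.flatMap_append, wordEval_append, ih, List.flatMap_singleton,
        hinv]
      simp [wordEval]
  have hquot : Primrec fun x : List (Fin m) × List (Fin m) => x.1 ++ x.2.reverse.flatMap inv :=
    Primrec.list_append.comp Primrec.fst
      (Primrec.list_flatMap (Primrec.list_reverse.comp Primrec.snd)
        ((Primrec.dom_finite inv).comp Primrec.snd))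
  exact (hwp.comp hquot).of_iff fun x => by rw [wordEval_append, hflat, mul_inv_eq_one]

variable {J : Type*} (u)

/-- A configuration `q : G → J → Bool` as a point of the effective Cantor space
`List (Fin m) × J → Bool`: the elements of `G` are addressed by the words that spell them. -/
def wordCode (q : G → J → Bool) : List (Fin m) × J → Bool := fun x => q (wordEval u x.1) x.2

variable {u} [Primcodable J]

theorem isEffClosed_range_wordCode (hu : Function.Surjective (wordEval u))
    (hwp : RE fun w => wordEval u w = 1) : IsEffClosed (Set.range (wordCode (J := J) u)) := by
  convert isEffClosed_setOf_forall_satisfies_imp_eq (α := (List (Fin m) × List (Fin m)) × J)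
    ((re_wordEval_eq hu hwp).comp Primrec.fst) (Primrec.const [])
    (i := fun a => (a.1.1, a.2)) (j := fun a => (a.1.2, a.2))
    ((Primrec.fst.comp Primrec.fst).pair Primrec.snd)
    ((Primrec.snd.comp Primrec.fst).pair Primrec.snd) using 1
  ext c
  simp only [Set.mem_range, Set.mem_ofPred_eq, Satisfies, Prod.forall, List.not_mem_nil,
    IsEmpty.forall_iff, implies_true, true_implies]
  constructor
  · rintro ⟨q, rfl⟩ w w' j hw
    simp only [wordCode, hw]
  · intro hc
    choose σ hσ using hu
    exact ⟨fun g j => c (σ g, j), funext fun x => hc _ _ _ (hσ _)⟩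

theorem IsEffClosed.image_preimage_wordCode {C : Set (List (Fin m) × J → Bool)}
    (hC : IsEffClosed C) (hu : Function.Surjective (wordEval u))
    (hwp : RE fun w => wordEval u w = 1) :
    IsEffClosed (wordCode u '' (wordCode u ⁻¹' C)) := by
  rw [Set.image_preimage_eq_inter_range]
  exact hC.inter (isEffClosed_range_wordCode hu hwp)

/-- Since `u` generates the ambient group `G`, the word codes of configurations on `G` form an
effectively closed action of the subgroup `Δ`, whatever the position of `Δ` in `G`. -/
theorem SelfSimulable.exists_sft_cover {Δ : Subgroup G} [Group.FG Δ] (hΔ : SelfSimulable Δ)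
    [Nonempty J] {Q : Set (G → J → Bool)} (hu : Function.Surjective (wordEval u))
    (hQ : IsEffClosed (wordCode u '' Q)) (hinv : ∀ g, ∀ q ∈ Q, shift g q ∈ Q) :
    ∃ (k : ℕ) (Z : Set (Δ → Fin k)) (φ : (Δ → Fin k) → G → J → Bool),
      IsSFT Z ∧ IsFactorMapOnto Z φ (fun δ => shift (δ : G)) Q := by
  choose σ hσ using hu
  let ρ : Δ → List (Fin m) × J → List (Fin m) × J := fun δ x => (σ (δ : G)⁻¹ ++ x.1, x.2)
  have hρ : ∀ δ, Primrec (ρ δ) := fun δ =>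
    (Primrec.list_append.comp (Primrec.const _) Primrec.fst).pair Primrec.snd
  have hρ_code : ∀ δ q, wordCode u q ∘ ρ δ = wordCode u (shift (δ : G) q) := fun δ q => by
    funext x
    simp only [Function.comp_apply, wordCode, ρ, shift, wordEval_append, hσ]
  have hact : IsActionOn (fun δ c => c ∘ ρ δ) (wordCode u '' Q) := by
    refine ⟨?_, ?_, ?_⟩
    · rintro δ _ ⟨q, hq, rfl⟩
      exact ⟨_, hinv δ q hq, (hρ_code δ q).symm⟩
    · rintro _ ⟨q, -, rfl⟩
      simp only [hρ_code, Subgroup.coe_one, shift_one]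
    · rintro δ δ' _ ⟨q, -, rfl⟩
      simp only [hρ_code, Subgroup.coe_mul, shift_mul]
  obtain ⟨k, Z, φ, hZ, hφ⟩ := hΔ.exists_factorMap_of_reindex hQ hρ hact
  let decode : (List (Fin m) × J → Bool) → G → J → Bool := fun c g j => c (σ g, j)
  have hdecode : ∀ q, decode (wordCode u q) = q := fun q => by
    funext g j
    simp only [decode, wordCode, hσ]
  refine ⟨k, Z, decode ∘ φ, hZ, ?_⟩
  have := hφ.comp (ψ := decode) (act' := fun δ => shift (δ : G))
    (Continuous.continuousOn (by fun_prop)) (by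
      rintro δ _ ⟨q, -, rfl⟩
      simp only [hρ_code, hdecode])
  rwa [Set.image_image, Set.image_congr fun q _ => hdecode q, Set.image_id'] at this

end Cover

section BlockCodes

variable {I A β : Type*} [TopologicalSpace A] [DiscreteTopology A] [TopologicalSpace β]
  [DiscreteTopology β] {Z : Set (I → A)} {f : (I → A) → β}

theorem exists_finset_forall_eq_imp_eq (hZ : IsCompact Z) (hf : ContinuousOn f Z) :
    ∃ M : Finset I, ∀ z ∈ Z, ∀ z' ∈ Z, (∀ i ∈ M, z i = z' i) → f z = f z' := by
  classical
  let p : Set (I → A) → Prop := fun S =>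
    ∃ M : Finset I, ∀ z ∈ S, z ∈ Z → ∀ z' ∈ Z, (∀ i ∈ M, z i = z' i) → f z = f z'
  suffices p Z from this.imp fun M hM z hz => hM z hz hz
  refine hZ.induction_on (p := p) ⟨∅, by simp⟩ ?_ ?_ fun z hz => ?_
  · exact fun S T hST ⟨M, hM⟩ => ⟨M, fun z hz => hM z (hST hz)⟩
  · rintro S T ⟨M, hM⟩ ⟨N, hN⟩
    refine ⟨M ∪ N, fun z hz hzZ z' hz' h => ?_⟩
    rcases hz with hz | hz
    · exact hM z hz hzZ z' hz' fun i hi => h i (Finset.mem_union_left N hi)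
    · exact hN z hz hzZ z' hz' fun i hi => h i (Finset.mem_union_right M hi)
  · have hfib : {z' | z' ∈ Z → f z = f z'} ∈ nhds z :=
      eventually_nhdsWithin_iff.1 ((hf z hz).eventually (mem_nhds_discrete.2 rfl))
    rw [nhds_pi, Filter.mem_pi'] at hfib
    obtain ⟨M, t, ht, hMt⟩ := hfib
    have hfz : ∀ z' ∈ Z, (∀ i ∈ M, z i = z' i) → f z = f z' := fun z' hz' h =>
      hMt (fun i hi => h i hi ▸ mem_of_mem_nhds (ht i)) hz'
    refine ⟨{z' | ∀ i ∈ M, z i = z' i}, mem_nhdsWithin_of_mem_nhds ?_, M, ?_⟩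
    · refine (Filter.eventually_all_finset M).2 fun i _ => ?_
      exact ((continuous_apply i).tendsto z).eventually (mem_nhds_discrete.2 rfl)
    · exact fun z₁ h₁ hz₁ z₂ hz₂ h => (hfz z₁ hz₁ h₁).symm.trans
        (hfz z₂ hz₂ fun i hi => (h₁ i hi).trans (h i hi))

theorem exists_finset_restrict_eqOn [Nonempty β] (hZ : IsCompact Z) (hf : ContinuousOn f Z) :
    ∃ (M : Finset I) (E : (M → A) → β), Set.EqOn (E ∘ M.restrict) f Z := by
  obtain ⟨M, hM⟩ := exists_finset_forall_eq_imp_eq hZ hf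
  have hfactors : Function.FactorsThrough (fun z : Z => f z) fun z : Z => M.restrict z.1 :=
    fun z z' h => hM z z.2 z' z'.2 fun i hi => congrFun h ⟨i, hi⟩
  exact ⟨M, Function.extend (fun z : Z => M.restrict z.1) (fun z : Z => f z)
    fun _ => Classical.arbitrary β, fun z hz => hfactors.extend_apply _ ⟨z, hz⟩⟩

theorem exists_continuous_eqOn [Nonempty β] (hZ : IsCompact Z) (hf : ContinuousOn f Z) :
    ∃ e : (I → A) → β, Continuous e ∧ Set.EqOn e f Z := by
  obtain ⟨M, E, hE⟩ := exists_finset_restrict_eqOn hZ hf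
  exact ⟨_, continuous_of_discreteTopology.comp (Finset.continuous_restrict M), hE⟩

variable {G : Type*} [Group G]

theorem isSFT_iff_exists_isClopen [Finite A] {X : Set (G → A)} :
    IsSFT X ↔ ∃ C : Set (G → A), IsClopen C ∧ ∀ x, x ∈ X ↔ ∀ g, (fun h => x (g * h)) ∈ C := by
  constructor
  · rintro ⟨F, L, hX⟩
    exact ⟨F.restrict ⁻¹' L, (isClopen_discrete L).preimage (Finset.continuous_restrict F), hX⟩
  · rintro ⟨C, hC, hX⟩
    obtain ⟨M, E, hE⟩ := exists_finset_restrict_eqOn isCompact_univ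
      (continuous_boolIndicator_iff_isClopen C |>.2 hC).continuousOn
    refine ⟨M, {p | E p = true}, fun x => (hX x).trans (forall_congr' fun g => ?_)⟩
    rw [Set.mem_iff_boolIndicator, ← hE (Set.mem_univ _)]
    rfl

theorem IsSFT.isSubshift [Finite A] {X : Set (G → A)} (hX : IsSFT X) : IsSubshift X := by
  obtain ⟨C, hC, hX⟩ := isSFT_iff_exists_isClopen.1 hX
  constructor
  · have hinter : X = ⋂ g : G, (fun x h => x (g * h)) ⁻¹' C := by
      ext x
      simp only [hX, Set.mem_iInter, Set.mem_preimage]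
    rw [hinter]
    exact isClosed_iInter fun g => hC.isClosed.preimage (by fun_prop)
  · intro g x hx
    rw [hX] at hx ⊢
    simpa only [shift, mul_assoc] using fun h => hx (g⁻¹ * h)

end BlockCodes

section Doubling

variable {H : Type*} [Group H]

/-- The translations `t k` double the group: a suitable choice `dir` of one translation for each
element of `H × Bool` embeds two copies of `H` into `H`. Such a tuple witnesses that `H` is not
amenable. -/
def IsDoubling {κ : ℕ} (t : Fin κ → H) : Prop :=
  ∃ dir : H × Bool → Fin κ, Function.Injective fun x => x.1 * t (dir x)

theorem exists_isDoubling_of_two_mul_card_le [DecidableEq H] {M : Finset H}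
    (hM : ∀ E : Finset H, 2 * E.card ≤ (E * M).card) :
    ∃ (κ : ℕ) (t : Fin κ → H), IsDoubling t := by
  classical
  obtain ⟨p, hp, hpM⟩ := (Finset.all_card_le_biUnion_card_iff_exists_injective
    fun x : H × Bool => x.1 • M).1 fun S => calc
      S.card ≤ (S.image Prod.fst ×ˢ (Finset.univ : Finset Bool)).card :=
        Finset.card_le_card
          (Finset.subset_product.trans (Finset.product_subset_product_right (Finset.subset_univ _)))
      _ = 2 * (S.image Prod.fst).card := by
        rw [Finset.card_product, Finset.card_univ, Fintype.card_bool, mul_comm]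
      _ ≤ (S.image Prod.fst * M).card := hM _
      _ = (S.biUnion fun x => x.1 • M).card := by
        rw [← smul_eq_mul, ← Finset.biUnion_smul_finset, Finset.image_biUnion]
  choose e he heq using fun x => Finset.mem_smul_finset.1 (hpM x)
  refine ⟨_, fun k => M.equivFin.symm k, fun x => M.equivFin ⟨e x, he x⟩, ?_⟩
  simpa only [Equiv.symm_apply_apply, ← smul_eq_mul, heq] using hp

variable {A β : Type*} [TopologicalSpace A] [DiscreteTopology A] [TopologicalSpace β]
  [DiscreteTopology β] {Z : Set (H → A)} {φ : (H → A) → H → β}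

theorem IsFactorMapOnto.exists_card_pow_le [Fintype A] [Fintype β] [Nonempty β] [DecidableEq H]
    (hZ : IsSubshift Z) (hφ : IsFactorMapOnto Z φ shift Set.univ) :
    ∃ M : Finset H, ∀ E : Finset H,
      Fintype.card β ^ E.card ≤ Fintype.card A ^ (E * M).card := by
  obtain ⟨hcont, -, hsurj, hequiv⟩ := hφ
  obtain ⟨M, b, hb⟩ := exists_finset_restrict_eqOn (f := fun z => φ z 1) hZ.1.isCompact
    ((continuous_apply 1).comp_continuousOn hcont)
  have hφ_apply : ∀ z ∈ Z, ∀ h, φ z h = b fun i : M => z (h * i) := fun z hz h => calc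
    φ z h = φ (shift h⁻¹ z) 1 := by simp only [hequiv _ z hz, shift, inv_inv, mul_one]
    _ = b (M.restrict (shift h⁻¹ z)) := (hb (hZ.2 h⁻¹ z hz)).symm
    _ = b fun i : M => z (h * i) := by simp only [Finset.restrict_def, shift, inv_inv]
  refine ⟨M, fun E => ?_⟩
  let extend : (E → β) → H → β := fun c =>
    Function.extend Subtype.val c fun _ => Classical.arbitrary β
  choose z hz hzc using fun c => hsurj (Set.mem_univ (extend c))
  have hinj : Function.Injective fun (c : E → β) (i : ↥(E * M)) => z c i := by
    intro c c' hcc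
    funext h
    have hφz : φ (z c) h = φ (z c') h := by
      simp only [hφ_apply _ (hz _)]
      exact congrArg b (funext fun i => congrFun hcc ⟨_, Finset.mul_mem_mul h.2 i.2⟩)
    simpa only [hzc, extend, Subtype.val_injective.extend_apply] using hφz
  simpa using Fintype.card_le_of_injective _ hinj

theorem IsFactorMapOnto.exists_isDoubling [Fintype A] [Fintype β] (hZ : IsSubshift Z)
    (hφ : IsFactorMapOnto Z φ shift Set.univ) (hcard : Fintype.card A ^ 2 < Fintype.card β) :
    ∃ (κ : ℕ) (t : Fin κ → H), IsDoubling t := by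
  classical
  have : Nonempty β := Fintype.card_pos_iff.1 (Nat.zero_lt_of_lt hcard)
  obtain ⟨z, -, -⟩ := hφ.2.2.1 (Set.mem_univ fun _ => Classical.arbitrary β)
  have : Nonempty A := ⟨z 1⟩
  obtain ⟨M, hM⟩ := hφ.exists_card_pow_le hZ
  refine exists_isDoubling_of_two_mul_card_le (M := M) fun E => ?_
  by_contra! hlt
  have hE : E.card ≠ 0 := by
    rintro hE
    simp [hE] at hlt
  refine (hM E).not_gt ?_
  calc Fintype.card A ^ (E * M).card ≤ Fintype.card A ^ (2 * E.card) :=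
        Nat.pow_le_pow_right Fintype.card_pos hlt.le
    _ = (Fintype.card A ^ 2) ^ E.card := pow_mul ..
    _ < Fintype.card β ^ E.card := Nat.pow_lt_pow_left hcard hE

variable {G : Type*} [Group G] {Δ : Subgroup G}

theorem SelfSimulable.exists_isDoubling [Group.FG Δ] (hΔ : SelfSimulable Δ) {m : ℕ}
    {u : Fin m → G} (hu : Function.Surjective (wordEval u)) (hwp : RE fun w => wordEval u w = 1) :
    ∃ (κ : ℕ) (t : Fin κ → Δ), IsDoubling t := by
  obtain ⟨k, Z, φ, hZ, hφ⟩ := hΔ.exists_sft_cover (J := ℕ) (Q := Set.univ) hu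
    (Set.image_univ ▸ isEffClosed_range_wordCode hu hwp) fun _ _ _ => Set.mem_univ _
  let ψ : (G → ℕ → Bool) → Δ → Fin (2 * k) → Bool := fun q δ n => q δ n
  have hψ : Function.Surjective ψ := fun c => by
    refine ⟨Function.extend Subtype.val
      (fun δ => Function.extend Fin.val (c δ) fun _ => false) fun _ _ => false, ?_⟩
    funext δ n
    simp only [ψ, Subtype.val_injective.extend_apply, Fin.val_injective.extend_apply]
  have hfull : IsFactorMapOnto Z (ψ ∘ φ) shift Set.univ := by
    rw [← Set.image_univ_of_surjective hψ]
    exact hφ.comp (Continuous.continuousOn (by fun_prop)) fun _ _ _ => rfl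
  refine hfull.exists_isDoubling hZ.isSubshift ?_
  simpa [mul_comm 2, pow_mul] using Nat.pow_lt_pow_left (Nat.lt_two_pow_self (n := k)) two_ne_zero

theorem IsDoubling.coe_subgroup {κ : ℕ} {t : Fin κ → Δ} (ht : IsDoubling t) :
    IsDoubling fun k => (t k : G) := by
  obtain ⟨dir, hdir⟩ := ht
  obtain ⟨S, hS, -⟩ := Δ.exists_isComplement_left 1
  refine ⟨fun x => dir ((hS.equiv x.1).2, x.2), fun x y hxy => ?_⟩
  have hequiv := congrArg hS.equiv hxy
  simp only [hS.equiv_mul_right, Prod.mk.injEq] at hequiv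
  have hΔ := @hdir ((hS.equiv x.1).2, x.2) ((hS.equiv y.1).2, y.2) hequiv.2
  simp only [Prod.mk.injEq] at hΔ
  refine Prod.ext (hS.equiv.injective (Prod.ext hequiv.1 hΔ.1)) hΔ.2

end Doubling

section Simulation

/-- The cells at one group element: a carried sequence of bits, a displayed sequence of bits, and
for each `b : Bool` and each translation index a flag telling whether the pointer `b` uses it. -/
abbrev Cell (κ : ℕ) := ℕ ⊕ ℕ ⊕ (Bool × Fin κ)

section Cells

variable {κ : ℕ}

/-- The cell holding the `n`-th carried bit. -/
abbrev Cell.carry (n : ℕ) : Cell κ := .inl n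

/-- The cell holding the `n`-th displayed bit. -/
abbrev Cell.display (n : ℕ) : Cell κ := .inr (.inl n)

/-- The cell flagging that the pointer `b` uses the translation of index `k`. -/
abbrev Cell.pointer (b : Bool) (k : Fin κ) : Cell κ := .inr (.inr (b, k))

end Cells

/-- The finitely many bits of `q` at `g` from which, along a coset of the steps, everything
displayed can be reconstructed: the first carried bit and the pointers. -/
def localData {G : Type*} {κ : ℕ} (q : G → Cell κ → Bool) (g : G) : Bool × (Bool → Fin κ → Bool) :=
  (q g (.carry 0), fun b k => q g (.pointer b k))

theorem continuous_localData {G : Type*} {κ : ℕ} (g : G) :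
    Continuous fun q : G → Cell κ → Bool => localData q g := by
  unfold localData
  fun_prop

variable {G : Type*} [Group G] {r κ m : ℕ}

/-- The configuration `q` simulates points of the set representation `Y`: at every `g` the tails
of the carried sequence are passed on along the pointer `false`, the displayed sequence is the one
carried along the pointer `true`, and the sequences displayed at the `g * (s i)⁻¹` form a point
of `Y`. Hence everything displayed is determined by the pointers and the carried initial bits. -/
structure IsSimulation (s : Fin r → G) (Y : Set (ℕ → Fin r → Bool)) (t : Fin κ → G)
    (q : G → Cell κ → Bool) : Prop where
  exists_pointer : ∀ g b, ∃ k, q g (.pointer b k) = true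
  carry_succ : ∀ g k, q g (.pointer false k) = true →
    ∀ n, q g (.carry (n + 1)) = q (g * t k) (.carry n)
  display_eq : ∀ g k, q g (.pointer true k) = true →
    ∀ n, q g (.display n) = q (g * t k) (.carry n)
  display_mem : ∀ g, (fun n i => q (g * (s i)⁻¹) (.display n)) ∈ Y

variable {s : Fin r → G} {Y : Set (ℕ → Fin r → Bool)} {t : Fin κ → G} {q : G → Cell κ → Bool}

theorem IsSimulation.shift (hq : IsSimulation s Y t q) (g : G) :
    IsSimulation s Y t (shift g q) where
  exists_pointer h := hq.exists_pointer (g⁻¹ * h)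
  carry_succ h k hk n := by
    simpa only [SelfSim.shift, mul_assoc] using hq.carry_succ (g⁻¹ * h) k hk n
  display_eq h k hk n := by
    simpa only [SelfSim.shift, mul_assoc] using hq.display_eq (g⁻¹ * h) k hk n
  display_mem h := by
    simpa only [SelfSim.shift, mul_assoc] using hq.display_mem (g⁻¹ * h)

theorem isEffClosed_setOf_exists_pointer : IsEffClosed
    {c : List (Fin m) × Cell κ → Bool | ∀ w b, ∃ k, c (w, .pointer b k) = true} := by
  have hflags : Primrec fun a : List (Fin m) × Bool =>
      (List.finRange κ).map fun k => ((a.1, (.pointer a.2 k : Cell κ)), false) :=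
    Primrec.list_map (Primrec.const _) (Primrec.pair (.pair (Primrec.fst.comp Primrec.fst)
      (Primrec.sumInr.comp (Primrec.sumInr.comp
        ((Primrec.snd.comp Primrec.fst).pair Primrec.snd)))) (Primrec.const false))
  convert isEffClosed_setOf_forall_not_satisfies RE.const_true hflags using 1
  ext c
  simp [Satisfies]

theorem isEffClosed_setOf_pointer_imp (b : Bool) {e : ℕ → Cell κ} (he : Primrec e)
    (v : Fin κ → List (Fin m)) : IsEffClosed {c : List (Fin m) × Cell κ → Bool |
      ∀ w k, c (w, .pointer b k) = true → ∀ n, c (w, e n) = c (w ++ v k, .carry n)} := by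
  have hw : Primrec fun a : (List (Fin m) × Fin κ) × ℕ => a.1.1 := Primrec.fst.comp Primrec.fst
  have hk : Primrec fun a : (List (Fin m) × Fin κ) × ℕ => a.1.2 := Primrec.snd.comp Primrec.fst
  have hflag : Primrec fun a : (List (Fin m) × Fin κ) × ℕ =>
      [((a.1.1, (.pointer b a.1.2 : Cell κ)), true)] :=
    Primrec.list_cons.comp (.pair (hw.pair (Primrec.sumInr.comp (Primrec.sumInr.comp
      ((Primrec.const b).pair hk)))) (Primrec.const true)) (Primrec.const [])
  convert isEffClosed_setOf_forall_satisfies_imp_eq RE.const_true hflag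
    (i := fun a => (a.1.1, e a.2)) (j := fun a => (a.1.1 ++ v a.1.2, .carry a.2))
    (hw.pair (he.comp Primrec.snd))
    (.pair (Primrec.list_append.comp hw ((Primrec.dom_finite v).comp hk))
      (Primrec.sumInl.comp Primrec.snd)) using 1
  ext c
  simp only [Set.mem_ofPred_eq, Satisfies, Prod.forall, List.forall_mem_singleton, true_imp_iff]
  grind

theorem isEffClosed_setOf_display_mem (hY : EffectivelyClosedSet Y) (v : Fin r → List (Fin m)) :
    IsEffClosed {c : List (Fin m) × Cell κ → Bool |
      ∀ w, (fun n i => c (w ++ v i, .display n)) ∈ Y} :=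
  hY.isEffClosed_reindex (ι := fun w (x : ℕ × Fin r) => (w ++ v x.2, (.display x.1 : Cell κ)))
    (Primrec.pair (Primrec.list_append.comp Primrec.fst
        ((Primrec.dom_finite v).comp (Primrec.snd.comp Primrec.snd)))
      (Primrec.sumInr.comp (Primrec.sumInl.comp (Primrec.fst.comp Primrec.snd))))

theorem isEffClosed_image_wordCode_isSimulation {u : Fin m → G}
    (hu : Function.Surjective (wordEval u)) (hwp : RE fun w => wordEval u w = 1)
    (hY : EffectivelyClosedSet Y) :
    IsEffClosed (wordCode u '' {q | IsSimulation s Y t q}) := by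
  choose σ hσ using id hu
  have hC := (isEffClosed_setOf_exists_pointer.inter
    ((isEffClosed_setOf_pointer_imp false (e := fun n => .carry (n + 1))
      (Primrec.sumInl.comp Primrec.succ) fun k => σ (t k)).inter
    (isEffClosed_setOf_pointer_imp true (e := .display)
      (Primrec.sumInr.comp Primrec.sumInl) fun k => σ (t k)))).inter
    (isEffClosed_setOf_display_mem hY fun i => σ (s i)⁻¹)
  convert hC.image_preimage_wordCode hu hwp using 2
  ext q
  simp only [Set.mem_preimage, Set.mem_inter_iff, Set.mem_ofPred_eq, wordCode, wordEval_append, hσ]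
  constructor
  · exact fun hq => ⟨⟨fun _ => hq.exists_pointer _, fun _ => hq.carry_succ _,
      fun _ => hq.display_eq _⟩, fun _ => hq.display_mem _⟩
  · rintro ⟨⟨hpointer, hcarry, hdisplay⟩, hmem⟩
    exact ⟨hu.forall.2 hpointer, hu.forall.2 hcarry, hu.forall.2 hdisplay, hu.forall.2 hmem⟩

theorem injective_iterate_apply {α : Type*} {a b : α → α} (ha : Function.Injective a)
    (hb : Function.Injective b) (hab : ∀ x y, a x ≠ b y) :
    Function.Injective fun x : α × ℕ => a^[x.2] (b x.1) := by
  rintro ⟨x, n⟩ ⟨y, k⟩ hxy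
  wlog hnk : n ≤ k generalizing x n y k
  · exact (this y k x n hxy.symm (le_of_not_ge hnk)).symm
  obtain ⟨d, rfl⟩ := Nat.exists_eq_add_of_le hnk
  simp only [Function.iterate_add_apply] at hxy
  have hd := ha.iterate n hxy
  cases d with
  | zero => rw [hb hd, add_zero]
  | succ d => exact (hab _ _ ((Function.iterate_succ_apply' ..).symm.trans hd.symm)).elim

variable {act : G → (ℕ → Bool) → ℕ → Bool} {X : Set (ℕ → Bool)}

/-- The `n`-th bit to be displayed at `g` is stored at `node (g, n)`, which is reached from `g` by
one step along the pointer `true` followed by `n` steps along the pointer `false`; no two bits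
compete for the same place because the pointers double the group. -/
theorem IsDoubling.exists_isSimulation (ht : IsDoubling t) (hact : IsActionOn act X)
    {x : ℕ → Bool} (hx : x ∈ X) :
    ∃ q, IsSimulation s (SetRep s act X) t q ∧ ∀ g n, q g (.display n) = act g⁻¹ x n := by
  obtain ⟨dir, hdir⟩ := ht
  let next : Bool → G → G := fun b g => g * t (dir (g, b))
  have hnext : ∀ b, Function.Injective (next b) := fun b g h hgh =>
    congrArg Prod.fst (@hdir (g, b) (h, b) hgh)
  let node : G × ℕ → G := fun y => (next false)^[y.2] (next true y.1)
  have hnode : Function.Injective node := injective_iterate_apply (hnext _) (hnext _)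
    fun g h hgh => Bool.false_ne_true (congrArg Prod.snd (@hdir (g, false) (h, true) hgh))
  let bit : G → Bool := Function.extend node (fun y => act y.1⁻¹ x y.2) fun _ => false
  let q : G → Cell κ → Bool := fun g => Sum.elim (fun n => bit ((next false)^[n] g))
    (Sum.elim (act g⁻¹ x) fun p => decide (dir (g, p.1) = p.2))
  refine ⟨q, ⟨fun g b => ⟨dir (g, b), ?_⟩, fun g k hk n => ?_, fun g k hk n => ?_, fun g => ?_⟩,
    fun g n => rfl⟩
  · simp [q]
  · obtain rfl : dir (g, false) = k := by simpa [q] using hk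
    simp only [q, Sum.elim_inl, Function.iterate_succ_apply, next]
  · obtain rfl : dir (g, true) = k := by simpa [q] using hk
    exact (hnode.extend_apply (fun y => act y.1⁻¹ x y.2) (fun _ => false) (g, n)).symm
  · refine ⟨act g⁻¹ x, hact.1 _ hx, fun i => ?_⟩
    simp only [q, Sum.elim_inr, Sum.elim_inl, mul_inv_rev, inv_inv, hact.2.2 _ _ _ hx]

theorem IsSimulation.display_eq_of_localData_eq {Δ : Subgroup G} {t : Fin κ → Δ}
    {q' : G → Cell κ → Bool} (hq : IsSimulation s Y (fun k => (t k : G)) q)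
    (hq' : IsSimulation s Y (fun k => (t k : G)) q') {g g' : G}
    (hloc : ∀ δ : Δ, localData q (g * δ) = localData q' (g' * δ)) (n : ℕ) :
    q g (.display n) = q' g' (.display n) := by
  have hpointer : ∀ (δ : Δ) b k,
      q (g * δ) (.pointer b k) = q' (g' * δ) (.pointer b k) := fun δ b k =>
    congrFun (congrFun (congrArg Prod.snd (hloc δ)) b) k
  have hcarry : ∀ n (δ : Δ), q (g * δ) (.carry n) = q' (g' * δ) (.carry n) := by
    intro n
    induction n with
    | zero => exact fun δ => congrArg Prod.fst (hloc δ)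
    | succ n ih =>
      intro δ
      obtain ⟨k, hk⟩ := hq.exists_pointer (g * δ) false
      rw [hq.carry_succ _ k hk, hq'.carry_succ _ k ((hpointer δ false k).symm.trans hk)]
      simpa only [Subgroup.coe_mul, mul_assoc] using ih (δ * t k)
  obtain ⟨k, hk⟩ := hq.exists_pointer g true
  have hk' : q' g' (.pointer true k) = true := by
    simpa only [Subgroup.coe_one, mul_one, hk] using (hpointer 1 true k).symm
  rw [hq.display_eq g k hk, hq'.display_eq g' k hk', hcarry n (t k)]

end Simulation

section Cosets

variable {G : Type*} [Group G] {A : Type*} (Δ : Subgroup G)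

/-- The restriction of `ζ` to the coset `g * Δ`, as a configuration on `Δ`. -/
def cosetView (ζ : G → A) (g : G) : Δ → A := fun δ => ζ (g * δ)

theorem continuous_cosetView [TopologicalSpace A] (g : G) :
    Continuous fun ζ : G → A => cosetView Δ ζ g := by
  unfold cosetView
  fun_prop

theorem cosetView_comp_mul_left (ζ : G → A) (g h : G) :
    cosetView Δ (fun k => ζ (g * k)) h = cosetView Δ ζ (g * h) := by
  funext δ
  simp only [cosetView, mul_assoc]

theorem cosetView_shift (ζ : G → A) (g h : G) :
    cosetView Δ (shift g ζ) h = cosetView Δ ζ (g⁻¹ * h) :=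
  cosetView_comp_mul_left Δ ζ g⁻¹ h

variable {Δ}

theorem cosetView_mul (ζ : G → A) (g : G) (δ : Δ) :
    cosetView Δ ζ (g * δ) = shift δ⁻¹ (cosetView Δ ζ g) := by
  funext δ'
  simp only [cosetView, shift, inv_inv, Subgroup.coe_mul, mul_assoc]

theorem exists_forall_cosetView {P : G → (Δ → A) → Prop} (hP : ∀ g, ∃ z, P g z)
    (hmul : ∀ g z (δ : Δ), P g z → P (g * δ) (shift δ⁻¹ z)) :
    ∃ ζ : G → A, ∀ g, P g (cosetView Δ ζ g) := by
  obtain ⟨S, hS, -⟩ := Δ.exists_isComplement_left 1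
  choose z hz using hP
  refine ⟨fun g => z (hS.equiv g).1 (hS.equiv g).2, fun g => ?_⟩
  have hview : cosetView Δ (fun g => z (hS.equiv g).1 (hS.equiv g).2) g =
      shift (hS.equiv g).2⁻¹ (z (hS.equiv g).1) := by
    funext δ
    simp only [cosetView, hS.equiv_mul_right, shift, inv_inv]
  have := hmul _ _ (hS.equiv g).2 (hz (hS.equiv g).1)
  rwa [hS.equiv_fst_mul_equiv_snd, ← hview] at this

theorem isSFT_setOf_forall_cosetView [Finite A] [TopologicalSpace A] [DiscreteTopology A]
    {β ι : Type*} [Nonempty β] [TopologicalSpace β] [DiscreteTopology β] [Finite ι]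
    {Z : Set (Δ → A)} (hZ : IsSFT Z) {f f' : ι → (Δ → A) → β} (hf : ∀ i, ContinuousOn (f i) Z)
    (hf' : ∀ i, ContinuousOn (f' i) Z) (v : ι → G) :
    IsSFT {ζ : G → A | ∀ g, cosetView Δ ζ g ∈ Z ∧
      ∀ i, f i (cosetView Δ ζ g) = f' i (cosetView Δ ζ (g * v i))} := by
  have hZc : IsCompact Z := hZ.isSubshift.1.isCompact
  choose e he hef using fun i => exists_continuous_eqOn hZc (hf i)
  choose e' he' hef' using fun i => exists_continuous_eqOn hZc (hf' i)
  obtain ⟨C, hC, hZC⟩ := isSFT_iff_exists_isClopen.1 hZ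
  refine isSFT_iff_exists_isClopen.2 ⟨{x | cosetView Δ x 1 ∈ C ∧
    ∀ i, e i (cosetView Δ x 1) = e' i (cosetView Δ x (v i))}, ?_, fun ζ => ?_⟩
  · rw [Set.ofPred_and, Set.ofPred_forall]
    refine (hC.preimage (continuous_cosetView Δ 1)).inter (isClopen_iInter_of_finite fun i => ?_)
    have hpair := ((he i).comp (continuous_cosetView (A := A) Δ 1)).prodMk
      ((he' i).comp (continuous_cosetView (A := A) Δ (v i)))
    exact (isClopen_discrete {p : β × β | p.1 = p.2}).preimage hpair
  · simp only [Set.mem_ofPred_eq, cosetView_comp_mul_left, forall_and, mul_one]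
    have hmem : (∀ g, cosetView Δ ζ g ∈ Z) ↔ ∀ g, cosetView Δ ζ g ∈ C := by
      constructor
      · exact fun h g => by simpa only [one_mul] using (hZC _).1 (h g) 1
      · refine fun h g => (hZC _).2 fun δ => ?_
        convert h (g * δ) using 1
        funext δ'
        rw [cosetView_mul, shift, inv_inv]
    rw [← hmem]
    refine and_congr_right fun h => forall₂_congr fun g i => ?_
    rw [hef i (h g), hef' i (h _)]

end Cosets

theorem IsActionOn.apply_mul_inv_eq {G β : Type*} [Group G] {act : G → β → β} {X : Set β}
    (hact : IsActionOn act X) {r : ℕ} {s : Fin r → G} (hs : Submonoid.closure (Set.range s) = ⊤)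
    {d : G → β} (hd : ∀ g, d g ∈ X) (hgen : ∀ g i, d (g * (s i)⁻¹) = act (s i) (d g)) (g h : G) :
    d (g * h⁻¹) = act h (d g) := by
  induction hs ▸ Submonoid.mem_top h using Submonoid.closure_induction generalizing g with
  | mem h hh =>
    obtain ⟨i, rfl⟩ := hh
    exact hgen g i
  | one => rw [hact.2.1 _ (hd g), inv_one, mul_one]
  | mul h h' _ _ ih ih' => rw [hact.2.2 _ _ _ (hd g), ← ih', ← ih, mul_inv_rev, mul_assoc]

section SimulatingShift

variable {G : Type*} [Group G] {Δ : Subgroup G} {r κ : ℕ} {A : Type*}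

/-- Over each coset of `Δ` the configuration is a point of `Z`, which `φ` turns into a simulation,
and the simulations of the cosets `g * Δ` and `g * (s i)⁻¹ * Δ` agree on finitely many bits. -/
def simulatingShift (s : Fin r → G) (Z : Set (Δ → A)) (φ : (Δ → A) → G → Cell κ → Bool) :
    Set (G → A) :=
  {ζ | ∀ g, cosetView Δ ζ g ∈ Z ∧ ∀ i, localData (φ (cosetView Δ ζ g)) (s i)⁻¹ =
    localData (φ (cosetView Δ ζ (g * (s i)⁻¹))) 1}

/-- The sequence of bits displayed at `g` by the configuration `ζ`. -/
def displayed (φ : (Δ → A) → G → Cell κ → Bool) (ζ : G → A) (g : G) : ℕ → Bool :=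
  fun n => φ (cosetView Δ ζ g) 1 (.display n)

variable [TopologicalSpace A] {s : Fin r → G} {t : Fin κ → Δ} {Z : Set (Δ → A)}
  {φ : (Δ → A) → G → Cell κ → Bool} {ζ : G → A}

theorem isSFT_simulatingShift [Finite A] [DiscreteTopology A] (hZ : IsSFT Z)
    (hφ : ContinuousOn φ Z) : IsSFT (simulatingShift s Z φ) := by
  have hloc : ∀ g, ContinuousOn (fun z => localData (φ z) g) Z := fun g =>
    (continuous_localData g).comp_continuousOn hφ
  exact isSFT_setOf_forall_cosetView hZ (fun i => hloc (s i)⁻¹) (fun _ => hloc 1) fun i => (s i)⁻¹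

section Displayed

variable {Y : Set (ℕ → Fin r → Bool)} (hφ : IsFactorMapOnto Z φ (fun δ => shift (δ : G))
  {q | IsSimulation s Y (fun k => (t k : G)) q})

include hφ

theorem IsFactorMapOnto.apply_cosetView_mul {g : G} (hg : cosetView Δ ζ g ∈ Z) (δ : Δ) (h : G) :
    φ (cosetView Δ ζ (g * δ)) h = φ (cosetView Δ ζ g) (δ * h) := by
  simp only [cosetView_mul, hφ.2.2.2 _ _ hg, shift, Subgroup.coe_inv, inv_inv]

/-- Normality makes the positions `g * (s i)⁻¹ * δ` run through a coset of `Δ` seen from `g`, so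
the agreement of the local data propagates along it. -/
theorem displayed_mul_inv [Δ.Normal] (hζ : ζ ∈ simulatingShift s Z φ) (g : G) (i : Fin r) :
    displayed φ ζ (g * (s i)⁻¹) = fun n => φ (cosetView Δ ζ g) (s i)⁻¹ (.display n) := by
  have hsim : ∀ g, IsSimulation s Y (fun k => (t k : G)) (φ (cosetView Δ ζ g)) :=
    fun g => hφ.2.1 (hζ g).1
  funext n
  refine (hsim _).display_eq_of_localData_eq (hsim g) (fun δ => ?_) n
  obtain ⟨δ', hδ'⟩ : ∃ δ' : Δ, (δ' : G) * (s i)⁻¹ = (s i)⁻¹ * δ :=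
    ⟨⟨_, Subgroup.Normal.conj_mem ‹_› _ δ.2 (s i)⁻¹⟩, by simp⟩
  have hmove : ∀ {g g' h h' : G} (δ : Δ), g * δ = g' → δ * h = h' →
      localData (φ (cosetView Δ ζ g')) h = localData (φ (cosetView Δ ζ g)) h' := by
    rintro g _ h _ δ rfl rfl
    simp only [localData, hφ.apply_cosetView_mul (hζ g).1]
  calc localData (φ (cosetView Δ ζ (g * (s i)⁻¹))) (1 * δ)
      = localData (φ (cosetView Δ ζ (g * (s i)⁻¹ * δ))) 1 := (hmove δ rfl (by simp)).symm
    _ = localData (φ (cosetView Δ ζ (g * δ' * (s i)⁻¹))) 1 := by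
      rw [mul_assoc, ← hδ', mul_assoc]
    _ = localData (φ (cosetView Δ ζ (g * δ'))) (s i)⁻¹ := ((hζ _).2 i).symm
    _ = localData (φ (cosetView Δ ζ g)) ((s i)⁻¹ * δ) := hmove δ' rfl hδ'

end Displayed

variable {act : G → (ℕ → Bool) → ℕ → Bool} {X : Set (ℕ → Bool)}
  (hφ : IsFactorMapOnto Z φ (fun δ => shift (δ : G))
    {q | IsSimulation s (SetRep s act X) (fun k => (t k : G)) q})
  (hact : IsActionOn act X)

include hφ hact

theorem displayed_mem_and_displayed_mul_inv [Δ.Normal] (hone : ∃ i, s i = 1)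
    (hζ : ζ ∈ simulatingShift s Z φ) (g : G) :
    displayed φ ζ g ∈ X ∧ ∀ i, displayed φ ζ (g * (s i)⁻¹) = act (s i) (displayed φ ζ g) := by
  obtain ⟨x, hx, hrep⟩ := (hφ.2.1 (hζ g).1).display_mem 1
  simp only [one_mul] at hrep
  have hrep' : ∀ i, displayed φ ζ (g * (s i)⁻¹) = act (s i) x := fun i =>
    (displayed_mul_inv hφ hζ g i).trans (hrep i)
  obtain ⟨i, hi⟩ := hone
  obtain rfl : displayed φ ζ g = x := by
    simpa only [hi, inv_one, mul_one, hact.2.1 x hx] using hrep' i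
  exact ⟨hx, hrep'⟩

theorem exists_mem_simulatingShift [Finite A] [DiscreteTopology A] (hZ : IsSFT Z)
    (ht : IsDoubling t) {x : ℕ → Bool} (hx : x ∈ X) :
    ∃ ζ ∈ simulatingShift s Z φ, displayed φ ζ 1 = x := by
  obtain ⟨q, hq, hqx⟩ := ht.coe_subgroup.exists_isSimulation (s := s) hact hx
  obtain ⟨ζ, hζ⟩ := exists_forall_cosetView (P := fun g z => z ∈ Z ∧ φ z = shift g⁻¹ q)
    (fun g => hφ.2.2.1 (hq.shift g⁻¹)) fun g z δ ⟨hz, hzq⟩ => by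
      refine ⟨hZ.isSubshift.2 _ z hz, ?_⟩
      rw [hφ.2.2.2 _ z hz, hzq, mul_inv_rev, shift_mul]
      rfl
  have hζq : ∀ g h, φ (cosetView Δ ζ g) h = q (g * h) := fun g h => by
    rw [(hζ g).2, shift, inv_inv]
  refine ⟨ζ, fun g => ⟨(hζ g).1, fun i => ?_⟩, ?_⟩
  · simp only [localData, hζq, mul_one]
  · funext n
    rw [displayed, hζq, mul_one, hqx, inv_one, hact.2.1 x hx]

theorem isFactorMapOnto_displayed [Δ.Normal] [Finite A] [DiscreteTopology A] (hZ : IsSFT Z)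
    (ht : IsDoubling t) (hone : ∃ i, s i = 1) (hs : Submonoid.closure (Set.range s) = ⊤) :
    IsFactorMapOnto (simulatingShift s Z φ) (fun ζ => displayed φ ζ 1) act X := by
  have hdisplayed := fun ζ (hζ : ζ ∈ simulatingShift s Z φ) =>
    displayed_mem_and_displayed_mul_inv hφ hact hone hζ
  refine ⟨?_, fun ζ hζ => (hdisplayed ζ hζ 1).1,
    fun x hx => exists_mem_simulatingShift hφ hact hZ ht hx, fun g ζ hζ => ?_⟩
  · have hview : ContinuousOn (fun ζ : G → A => φ (cosetView Δ ζ 1)) (simulatingShift s Z φ) :=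
      hφ.1.comp (continuous_cosetView Δ 1).continuousOn fun ζ hζ => (hζ 1).1
    have hbits : Continuous fun (q : G → Cell κ → Bool) (n : ℕ) => q 1 (.display n) := by
      fun_prop
    exact hbits.comp_continuousOn hview
  · calc displayed φ (shift g ζ) 1 = displayed φ ζ (1 * g⁻¹) := by
          unfold displayed
          rw [cosetView_shift, mul_one, one_mul]
      _ = act g (displayed φ ζ 1) :=
          hact.apply_mul_inv_eq hs (fun g => (hdisplayed ζ hζ g).1)
            (fun g => (hdisplayed ζ hζ g).2) 1 g

end SimulatingShift

/-- A finitely generated recursively presented group with a normal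
self-simulable (finitely generated) subgroup is self-simulable. -/
theorem selfSimulable_of_normal_selfSimulable
    (G : Type*) [Group G] (hfg : Group.FG G) (hrp : RecursivelyPresented G)
    (Δ : Subgroup G) (hnorm : Δ.Normal)
    (hΔfg : Group.FG ↥Δ) (hΔss : SelfSimulable ↥Δ) :
    SelfSimulable G := by
  rintro X act ⟨r, s, -, hact, hone, hs, hY⟩
  obtain ⟨m, u, hu, hwp⟩ := hrp
  have hu := surjective_wordEval hu
  obtain ⟨κ, t, ht⟩ := hΔss.exists_isDoubling hu hwp
  obtain ⟨k, Z, φ, hZ, hφ⟩ := hΔss.exists_sft_cover (J := Cell κ) hu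
    (isEffClosed_image_wordCode_isSimulation hu hwp hY (s := s) (t := fun k => (t k : G)))
    fun g q hq => hq.shift g
  exact ⟨k, _, _, isSFT_simulatingShift hZ hφ.1,
    isFactorMapOnto_displayed hφ hact hZ ht hone hs⟩

end SelfSim
end

section
/- Let Γ be a finitely generated self-simulable group and let N ≤ Γ be a subgroup of finite index. Then N is finitely generated and self-simulable. -/
open scoped Pointwise

namespace SelfSim

/-!
Let `T` be a right transversal of `N` in `G`. An action of `N` on `X` coinduces an action of `G` on
`T → X`, and if the former is effectively closed then so is the latter. Indeed, the orbits of the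
points of an effectively closed action, recorded along all words in the generators, form a `Π⁰₁`
class. A generator `t` of `G` acts on the component at `c ∈ T` through an element of `N`, which is a
word in the generators of `N` and in general not a single one; so the set representation of the
coinduced action is obtained from finitely many such orbits by a primitive recursive reindexing. By
compactness, images of `Π⁰₁` classes under reindexings are effectively closed.

Self-simulability of `G` then presents the coinduced action as a factor of a subshift of finite type
`Z` over `G`. Collecting the letters at the elements of each `n * T` into a single letter at `n`
turns `Z` into a subshift of finite type over `N`, and the component at `1 ∈ T` is an
`N`-equivariant map of `T → X` onto `X`.
-/

/-! ### Recursive enumerability -/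

theorem RE.exists_primrec_enumeration {α : Type*} [Primcodable α] {p : α → Prop} (hp : RE p) :
    ∃ e : ℕ → Option α, Primrec e ∧ ∀ a, p a ↔ ∃ n, e n = some a := by
  obtain ⟨c, hc⟩ := Nat.Partrec.Code.exists_code.1 hp
  have dom_eval_iff {i : ℕ} {a : α} (hi : Encodable.decode i = some a) :
      (∃ x, x ∈ c.eval i) ↔ p a := by
    simp [hc, hi]
  -- Dovetailing: `n` codes a time bound together with the code of a candidate.
  refine ⟨fun n => (c.evaln n.unpair.1 n.unpair.2).bind fun _ => Encodable.decode n.unpair.2,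
    ?_, fun a => ⟨fun ha => ?_, fun ⟨n, hn⟩ => ?_⟩⟩
  · have hbound : Primrec fun n : ℕ => n.unpair.1 := Primrec.fst.comp Primrec.unpair
    have hcode : Primrec fun n : ℕ => n.unpair.2 := Primrec.snd.comp Primrec.unpair
    exact Primrec.option_bind
      (Nat.Partrec.Code.primrec_evaln.comp ((hbound.pair (Primrec.const c)).pair hcode))
      (Primrec.decode.comp (hcode.comp Primrec.fst))
  · obtain ⟨x, hx⟩ := (dom_eval_iff (Encodable.encodek a)).2 ha
    obtain ⟨k, hk⟩ := Nat.Partrec.Code.evaln_complete.1 hx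
    exact ⟨Nat.pair k (Encodable.encode a), by simp [Option.mem_def.1 hk]⟩
  · obtain ⟨x, hx, hdecode⟩ := Option.bind_eq_some_iff.1 hn
    exact (dom_eval_iff hdecode).1 ⟨x, Nat.Partrec.Code.evaln_sound hx⟩

theorem RE.of_exists_primrecRel {α : Type*} [Primcodable α] {R : ℕ → α → Prop}
    (hR : PrimrecRel R) : RE fun a => ∃ n, R n a := by
  classical
  have hsearch : Computable₂ fun (a : α) (n : ℕ) => decide (R n a) :=
    (hR.decide.comp Primrec.snd Primrec.fst).to_comp
  refine REPred.of_eq (Partrec.rfind hsearch.partrec₂).dom_re fun a => ?_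
  simp [Nat.rfind_dom]

theorem exists_primrec_wordsOfLength (A : Type*) [Finite A] [Primcodable A] :
    ∃ W : ℕ → List (List A), Primrec W ∧ ∀ M u, u ∈ W M ↔ u.length = M := by
  obtain ⟨letters, -, hletters⟩ := Finite.exists_univ_list A
  refine ⟨fun M => M.rec [[]] fun _ V => V.flatMap fun u => letters.map (· :: u), ?_, ?_⟩
  · refine Primrec.nat_rec₁ _ (Primrec.list_flatMap Primrec.snd ?_)
    exact Primrec.list_map (Primrec.const letters)
      (Primrec.list_cons.comp Primrec.snd (Primrec.snd.comp Primrec.fst))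
  · intro M
    induction M with
    | zero => simp
    | succ M ih =>
      intro u
      cases u <;> simp [ih, hletters]

/-! ### Finite patterns and `Π⁰₁` classes -/

/-- The fan theorem, a form of König's lemma. -/
theorem exists_length_of_forall_exists_prefix {A : Type*} [Finite A] {P : List A → Prop}
    (hmono : ∀ ⦃u v⦄, u <+: v → P u → P v)
    (hbar : ∀ z : ℕ → A, ∃ M, P ((List.range M).map z)) : ∃ M, ∀ u, u.length = M → P u := by
  rcases isEmpty_or_nonempty A with hA | ⟨⟨a⟩⟩
  · refine ⟨1, fun u hu => ?_⟩
    obtain ⟨a, -⟩ := List.exists_mem_of_length_pos (hu ▸ one_pos)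
    exact hA.elim a
  let _ : TopologicalSpace A := ⊥
  have : DiscreteTopology A := ⟨rfl⟩
  let U (M : ℕ) : Set (ℕ → A) := {z | P ((List.range M).map z)}
  have hopen (M : ℕ) : IsOpen (U M) := by
    have hrestrict : Continuous fun (z : ℕ → A) (i : Fin M) => z i := by fun_prop
    have hU : U M = (fun (z : ℕ → A) (i : Fin M) => z i) ⁻¹' {v | P (List.ofFn v)} := by
      ext z
      simp [U, List.ofFn_eq_map, ← List.map_coe_finRange_eq_range, Function.comp_def]
    exact hU ▸ (isOpen_discrete _).preimage hrestrict
  have hU_mono : Monotone U := fun M M' hM z =>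
    hmono (List.prefix_iff_eq_take.2 (by simp [← List.map_take, List.take_range, hM]))
  obtain ⟨M, hM⟩ := isCompact_univ.elim_directed_cover U hopen
    (fun z _ => Set.mem_iUnion.2 (hbar z)) hU_mono.directed_le
  refine ⟨M, fun u hu => ?_⟩
  have hu_eq : (List.range M).map (fun i => u.getD i a) = u := by
    subst hu
    exact List.ext_getElem (by simp) (by simp +contextual)
  exact hu_eq ▸ hM (Set.mem_univ fun i => u.getD i a)

/-- A finite pattern, given as a list of (position, letter) pairs, occurs in `z`. -/
def Matches {J A : Type*} (z : J → A) (c : List (J × A)) : Prop :=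
  ∀ p ∈ c, z p.1 = p.2

/-- A `Π⁰₁` class of configurations over the index set `J`: those avoiding a recursively
enumerable list of finite patterns. The enumeration is primitive recursive, and `none` means that
no pattern is produced at that stage. -/
def IsPi01 {J A : Type*} [Primcodable J] [Primcodable A] (Z : Set (J → A)) : Prop :=
  ∃ e : ℕ → Option (List (J × A)), Primrec e ∧ ∀ z, z ∈ Z ↔ ∀ n, ∀ c ∈ e n, ¬ Matches z c

theorem matches_map_iff {J J' A : Type*} (z : J → A) (f : J' → J) (c : List (J' × A)) :
    Matches z (c.map (Prod.map f id)) ↔ Matches (z ∘ f) c :=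
  List.forall_mem_map

theorem primrec_map_prodMap {K J J' A : Type*} [Primcodable K] [Primcodable J] [Primcodable J']
    [Primcodable A] {f : K → J' → J} (hf : Primrec₂ f) :
    Primrec₂ fun k (c : List (J' × A)) => c.map (Prod.map (f k) id) :=
  Primrec.list_map Primrec.snd ((hf.comp (Primrec.fst.comp Primrec.fst)
    (Primrec.fst.comp Primrec.snd)).pair (Primrec.snd.comp Primrec.snd))

theorem isClopen_setOf_matches {J A : Type*} [TopologicalSpace A] [DiscreteTopology A]
    (c : List (J × A)) : IsClopen {z : J → A | Matches z c} := by
  have hc : {z : J → A | Matches z c} = ⋂ p ∈ {p | p ∈ c}, (fun z => z p.1) ⁻¹' {p.2} := by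
    ext z
    simp [Matches]
  rw [hc]
  exact c.finite_toSet.isClopen_biInter fun p _ =>
    (isClopen_discrete {p.2}).preimage (continuous_apply p.1)

section Refutes

variable {J A : Type*} [Encodable J]

/-- `Refutes e u c`: knowing of a configuration `z` only the values recorded in the word `u`,
where the letter of `u` at position `Encodable.encode j` stands for `z j`, and having run `e` for
`u.length` stages, one already sees that `z` does not match `c` or that `z` matches a pattern
enumerated by `e`. -/
def Refutes (e : ℕ → Option (List (J × A))) (u : List A) (c : List (J × A)) : Prop :=
  (∃ p ∈ c, ∃ a ∈ u[Encodable.encode p.1]?, a ≠ p.2) ∨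
    ∃ n < u.length, ∃ d ∈ e n, ∀ p ∈ d, p.2 ∈ u[Encodable.encode p.1]?

theorem Refutes.mono {e : ℕ → Option (List (J × A))} {u v : List A} {c : List (J × A)}
    (huv : u <+: v) (hu : Refutes e u c) : Refutes e v c := by
  have hread {i : ℕ} {a : A} (ha : a ∈ u[i]?) : a ∈ v[i]? := by
    obtain ⟨hi, rfl⟩ := List.getElem?_eq_some_iff.1 ha
    exact List.prefix_iff_getElem?.1 huv i hi
  rcases hu with ⟨p, hp, a, ha, hne⟩ | ⟨n, hn, d, hd, h⟩
  · exact .inl ⟨p, hp, a, hread ha, hne⟩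
  · exact .inr ⟨n, hn.trans_le huv.length_le, d, hd, fun p hp => hread (h p hp)⟩

theorem exists_refutes_prefix_iff {e : ℕ → Option (List (J × A))} {z : ℕ → A}
    {c : List (J × A)} : (∃ M, Refutes e ((List.range M).map z) c) ↔
      ¬ Matches (z ∘ Encodable.encode) c ∨ ∃ n, ∃ d ∈ e n, Matches (z ∘ Encodable.encode) d := by
  have hread {M i : ℕ} {a : A} : a ∈ ((List.range M).map z)[i]? ↔ i < M ∧ z i = a := by
    simp [List.getElem?_eq_some_iff]
  constructor
  · rintro ⟨M, ⟨p, hp, a, ha, hne⟩ | ⟨n, -, d, hd, h⟩⟩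
    · exact .inl fun hmatch => hne ((hread.1 ha).2.symm.trans (hmatch p hp))
    · exact .inr ⟨n, d, hd, fun p hp => (hread.1 (h p hp)).2⟩
  · rintro (hmismatch | ⟨n, d, hd, h⟩)
    · obtain ⟨p, hp, hne⟩ : ∃ p ∈ c, z (Encodable.encode p.1) ≠ p.2 := by
        simpa [Matches] using hmismatch
      exact ⟨Encodable.encode p.1 + 1,
        .inl ⟨p, hp, _, hread.2 ⟨Nat.lt_succ_self _, rfl⟩, hne⟩⟩
    · obtain ⟨B, hB⟩ := (d.finite_toSet.image fun p => Encodable.encode p.1).bddAbove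
      have hlt (p) (hp : p ∈ d) : Encodable.encode p.1 < B + (n + 1) :=
        (hB (Set.mem_image_of_mem _ hp)).trans_lt (by omega)
      have hn : n < ((List.range (B + (n + 1))).map z).length := by
        rw [List.length_map, List.length_range]
        omega
      exact ⟨B + (n + 1), .inr ⟨n, hn, d, hd, fun p hp => hread.2 ⟨hlt p hp, h p hp⟩⟩⟩

end Refutes

section Pi01

variable {J J' K A : Type*} [Primcodable J] [Primcodable J'] [Primcodable K] [Primcodable A]

theorem IsPi01.of_index {Z : Set (J → A)} {e : K → Option (List (J × A))} (he : Primrec e)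
    (hZ : ∀ z, z ∈ Z ↔ ∀ k, ∀ c ∈ e k, ¬ Matches z c) : IsPi01 Z := by
  refine ⟨fun n => (Encodable.decode n).bind e,
    Primrec.option_bind Primrec.decode (he.comp Primrec.snd), fun z => ?_⟩
  rw [hZ]
  constructor
  · intro h n c hc
    obtain ⟨k, -, hk⟩ := Option.bind_eq_some_iff.1 hc
    exact h k c hk
  · intro h k c hc
    exact h (Encodable.encode k) c (by simpa using hc)

theorem IsPi01.inter {Y Z : Set (J → A)} (hY : IsPi01 Y) (hZ : IsPi01 Z) : IsPi01 (Y ∩ Z) := by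
  obtain ⟨d, hd, hYd⟩ := hY
  obtain ⟨e, he, hZe⟩ := hZ
  exact .of_index (e := Sum.elim d e)
    (Primrec.sumCasesOn Primrec.id (hd.comp Primrec.snd) (he.comp Primrec.snd))
    (by simp [hYd, hZe])

theorem IsPi01.forall_comp {Z : Set (J' → A)} (hZ : IsPi01 Z) {f : K → J' → J}
    (hf : Primrec₂ f) : IsPi01 {z : J → A | ∀ k, z ∘ f k ∈ Z} := by
  obtain ⟨e, he, hZe⟩ := hZ
  have hmap : Primrec₂ fun (q : K × ℕ) (c : List (J' × A)) => c.map (Prod.map (f q.1) id) :=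
    (primrec_map_prodMap hf).comp (Primrec.fst.comp Primrec.fst) Primrec.snd
  refine .of_index (Primrec.option_map (he.comp Primrec.snd) hmap) fun z => ?_
  simp [hZe, matches_map_iff]

theorem isPi01_setOf_comp_eq {f g : K → J} (hf : Primrec f) (hg : Primrec g) :
    IsPi01 {z : J → A | ∀ k, z (f k) = z (g k)} := by
  classical
  refine .of_index (e := fun q : K × A × A =>
    if q.2.1 = q.2.2 then none else some [(f q.1, q.2.1), (g q.1, q.2.2)]) ?_ fun z => ?_
  · have hfst : Primrec fun q : K × A × A => q.2.1 := Primrec.fst.comp Primrec.snd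
    have hsnd : Primrec fun q : K × A × A => q.2.2 := Primrec.snd.comp Primrec.snd
    refine Primrec.ite (Primrec.eq.comp hfst hsnd) (Primrec.const none)
      (Primrec.option_some.comp ?_)
    exact Primrec.list_cons.comp ((hf.comp Primrec.fst).pair hfst)
      (Primrec.list_cons.comp ((hg.comp Primrec.fst).pair hsnd) (Primrec.const []))
  · refine ⟨fun h ⟨k, a, b⟩ c hc hmatch => ?_, fun h k => ?_⟩
    · obtain ⟨hab, rfl⟩ : a ≠ b ∧ [(f k, a), (g k, b)] = c := by
        simpa [ite_eq_iff] using hc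
      have hfa : z (f k) = a := hmatch (f k, a) (by simp)
      have hgb : z (g k) = b := hmatch (g k, b) (by simp)
      exact hab (hfa ▸ hgb ▸ h k)
    · by_contra hne
      exact h (k, z (f k), z (g k)) _ (if_neg hne) (by simp [Matches])

theorem IsPi01.isClosed [TopologicalSpace A] [DiscreteTopology A] {Z : Set (J → A)}
    (hZ : IsPi01 Z) : IsClosed Z := by
  obtain ⟨e, -, hZe⟩ := hZ
  have hZ_eq : Z = ⋂ (n) (c ∈ e n), {z | Matches z c}ᶜ := by
    ext z
    simp [hZe]
  rw [hZ_eq]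
  exact isClosed_iInter fun n => isClosed_biInter fun c _ =>
    (isClopen_setOf_matches c).compl.isClosed

theorem primrecRel_refutes {e : ℕ → Option (List (J × A))} (he : Primrec e) :
    PrimrecRel (Refutes e) := by
  have hread : Primrec fun q : (J × A) × List A => q.2[Encodable.encode q.1.1]? :=
    Primrec.list_getElem?.comp Primrec.snd (Primrec.encode.comp (Primrec.fst.comp Primrec.fst))
  have hletter : Primrec fun q : (J × A) × List A => q.1.2 := Primrec.snd.comp Primrec.fst
  have hconflict : PrimrecRel fun (p : J × A) (u : List A) =>
      ∃ a ∈ u[Encodable.encode p.1]?, a ≠ p.2 :=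
    (Primrec.eq.comp (Primrec.option_getD.comp hread hletter) hletter).not.of_eq fun ⟨p, u⟩ => by
      rcases h : u[Encodable.encode p.1]? with _ | a <;> simp [h]
  have hmatch : PrimrecRel fun (p : J × A) (u : List A) => p.2 ∈ u[Encodable.encode p.1]? :=
    Primrec.eq.comp hread (Primrec.option_some.comp hletter)
  have hstages : Primrec fun u : List A => (List.range u.length).filterMap e :=
    Primrec.listFilterMap (Primrec.list_range.comp Primrec.list_length) (he.comp Primrec.snd)
  refine ((hconflict.exists_mem_list.comp Primrec.snd Primrec.fst).or
    (hmatch.forall_mem_list.exists_mem_list.comp (hstages.comp Primrec.fst) Primrec.fst)).of_eq ?_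
  rintro ⟨u, c⟩
  refine or_congr_right ⟨fun ⟨d, hd, h⟩ => ?_, fun ⟨n, hn, d, hd, h⟩ => ⟨d, ?_, h⟩⟩
  · obtain ⟨n, hn, hnd⟩ := List.mem_filterMap.1 hd
    exact ⟨n, List.mem_range.1 hn, d, hnd, h⟩
  · exact List.mem_filterMap.2 ⟨n, List.mem_range.2 hn, hd⟩

theorem IsPi01.re_forall_not_matches [Finite A] [Nonempty A] {Z : Set (J → A)} (hZ : IsPi01 Z) :
    RE fun c => ∀ z ∈ Z, ¬ Matches z c := by
  obtain ⟨e, he, hZe⟩ := hZ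
  obtain ⟨W, hW, hWlength⟩ := exists_primrec_wordsOfLength A
  have hsearch : PrimrecRel fun M (c : List (J × A)) => ∀ u ∈ W M, Refutes e u c :=
    (primrecRel_refutes he).forall_mem_list.comp (hW.comp Primrec.fst) Primrec.snd
  refine REPred.of_eq (RE.of_exists_primrecRel hsearch) fun c => ?_
  simp only [hWlength]
  have hlift : Function.Surjective fun z : ℕ → A => z ∘ (Encodable.encode : J → ℕ) :=
    Encodable.encode_injective.surjective_comp_right
  calc (∃ M, ∀ u : List A, u.length = M → Refutes e u c)
      ↔ ∀ z : ℕ → A, ∃ M, Refutes e ((List.range M).map z) c :=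
        ⟨fun ⟨M, hM⟩ z => ⟨M, hM _ (by simp)⟩,
          exists_length_of_forall_exists_prefix fun _ _ => Refutes.mono⟩
    _ ↔ ∀ z : J → A, ¬ Matches z c ∨ ∃ n, ∃ d ∈ e n, Matches z d := by
        simp only [exists_refutes_prefix_iff, hlift.forall]
    _ ↔ ∀ z ∈ Z, ¬ Matches z c := by
        refine forall_congr' fun z => ?_
        rw [hZe, or_comm, or_iff_not_imp_left]
        push Not
        rfl

end Pi01

/-! ### Effectively closed sets -/

section EffectivelyClosedSet

variable {A : Type*} {m : ℕ}

/-- The cylinder of a word over `Fin m → A`, as a finite pattern over `ℕ × Fin m`. -/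
def wordPattern (w : List (Fin m → A)) : List ((ℕ × Fin m) × A) :=
  (List.range w.length ×ˢ List.finRange m).filterMap fun q => w[q.1]?.map fun v => (q, v q.2)

theorem matches_wordPattern_iff (y : ℕ → Fin m → A) (w : List (Fin m → A)) :
    Matches (fun q : ℕ × Fin m => y q.1 q.2) (wordPattern w) ↔ ExtendsWord y w := by
  constructor
  · refine fun h n => funext fun i => h ((n, i), w.get n i) ?_
    simp [wordPattern]
  · intro h p hp
    obtain ⟨⟨n, i⟩, -, hq⟩ := List.mem_filterMap.1 hp
    obtain ⟨v, hv, rfl⟩ := Option.map_eq_some_iff.1 hq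
    obtain ⟨hn, rfl⟩ := List.getElem?_eq_some_iff.1 hv
    exact congrFun (h ⟨n, hn⟩) i

variable [Primcodable A] [Finite A]

theorem primrec_wordPattern : Primrec (wordPattern (A := A) (m := m)) := by
  have hpositions : Primrec fun w : List (Fin m → A) => List.range w.length ×ˢ List.finRange m :=
    Primrec.list_flatMap (Primrec.list_range.comp Primrec.list_length) <|
      Primrec.list_map (Primrec.const _)
        ((Primrec.snd.comp Primrec.fst).pair Primrec.snd)
  have heval : Primrec fun p : (Fin m → A) × Fin m => p.1 p.2 := Primrec.dom_finite _
  refine Primrec.listFilterMap hpositions (Primrec.option_map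
    (Primrec.list_getElem?.comp Primrec.fst (Primrec.fst.comp Primrec.snd)) ?_)
  exact (Primrec.snd.comp Primrec.fst).pair
    (heval.comp (Primrec.snd.pair (Primrec.snd.comp (Primrec.snd.comp Primrec.fst))))

variable [TopologicalSpace A] [DiscreteTopology A]

theorem EffectivelyClosedSet.isPi01 {Z : Set (ℕ → Fin m → A)} (hZ : EffectivelyClosedSet Z) :
    IsPi01 {z : ℕ × Fin m → A | Function.curry z ∈ Z} := by
  obtain ⟨hclosed, hre⟩ := hZ
  obtain ⟨e, he, hZe⟩ := hre.exists_primrec_enumeration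
  refine ⟨fun n => (e n).map wordPattern,
    Primrec.option_map he (primrec_wordPattern.comp Primrec.snd), fun z => ?_⟩
  suffices Function.curry z ∈ Z ↔ ∀ n, ∀ w ∈ e n, ¬ ExtendsWord (Function.curry z) w by
    simpa [← matches_wordPattern_iff, Function.curry] using this
  refine ⟨fun hz n w hw hext => (hZe w).2 ⟨n, hw⟩ _ hext hz, fun h => ?_⟩
  by_contra hz
  obtain ⟨M, hM⟩ := PiNat.exists_disjoint_cylinder hclosed hz
  let w := List.ofFn fun i : Fin M => Function.curry z i
  obtain ⟨n, hn⟩ := (hZe w).1 fun x hx hxZ => Set.disjoint_left.1 hM hxZ fun i hi => by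
    simpa [w] using hx ⟨i, by simpa [w] using hi⟩
  exact h n w hn fun i => by simp [w]

theorem IsPi01.effectivelyClosedSet_comp [Nonempty A] {J : Type*} [Primcodable J]
    {Z : Set (J → A)} (hZ : IsPi01 Z) {f : ℕ → Fin m → J} (hf : Primrec₂ f) :
    EffectivelyClosedSet ((fun z n i => z (f n i)) '' Z) := by
  constructor
  · have hcont : Continuous fun (z : J → A) n i => z (f n i) := by fun_prop
    exact (hZ.isClosed.isCompact.image hcont).isClosed
  · let pattern (w : List (Fin m → A)) : List (J × A) :=
      (wordPattern w).map (Prod.map (fun q => f q.1 q.2) id)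
    have hreindex : Primrec₂ fun (_ : List (Fin m → A)) (p : (ℕ × Fin m) × A) =>
        Prod.map (fun q => f q.1 q.2) id p :=
      (hf.comp (Primrec.fst.comp (Primrec.fst.comp Primrec.snd))
        (Primrec.snd.comp (Primrec.fst.comp Primrec.snd))).pair (Primrec.snd.comp Primrec.snd)
    have hpattern : Computable pattern := (Primrec.list_map primrec_wordPattern hreindex).to_comp
    have hre : RE fun w => ∀ z ∈ Z, ¬ Matches z (pattern w) :=
      Partrec.comp hZ.re_forall_not_matches hpattern
    have hmatches (z : J → A) (w : List (Fin m → A)) :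
        Matches z (pattern w) ↔ ExtendsWord (fun n i => z (f n i)) w := by
      rw [matches_map_iff, ← matches_wordPattern_iff]
      rfl
    refine REPred.of_eq hre fun w => ?_
    simp only [hmatches]
    refine ⟨?_, fun h z hz hx => h _ hx ⟨z, hz, rfl⟩⟩
    rintro h _ hx ⟨z, hz, rfl⟩
    exact h z hz hx

end EffectivelyClosedSet

/-! ### Orbit representations -/

section OrbitRep

variable {G A : Type*} [Group G] {m : ℕ}

theorem exists_generating_tuple (G : Type*) [Group G] [Group.FG G] :
    ∃ (m : ℕ) (t : Fin m → G), (∃ i, t i = 1) ∧ Submonoid.closure (Set.range t) = ⊤ := by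
  obtain ⟨S, hS, hSfin⟩ := Monoid.fg_iff.1 (Group.fg_iff_monoid_fg.1 ‹Group.FG G›)
  obtain ⟨m, t, -, ht⟩ := (hSfin.insert 1).fin_param
  refine ⟨m, t, (Set.ext_iff.1 ht 1).2 (Set.mem_insert 1 S), top_unique ?_⟩
  exact hS ▸ Submonoid.closure_mono (ht ▸ Set.subset_insert 1 S)

theorem surjective_word_prod {s : Fin m → G} (hs : Submonoid.closure (Set.range s) = ⊤) :
    Function.Surjective fun u : List (Fin m) => (u.map s).prod := by
  intro g
  obtain ⟨l, hl, rfl⟩ := Submonoid.exists_list_of_mem_closure (hs ▸ Submonoid.mem_top g)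
  obtain ⟨u, rfl⟩ : l ∈ Set.range (List.map s) := Set.range_list_map s ▸ hl
  exact ⟨u, rfl⟩

/-- The representation of an action by whole orbits: a point `x ∈ X` is recorded as the values of
all its translates by words in the generators `s`, the generators acting from the head of the word.
In contrast to `SetRep`, translates by products of generators are recorded too. -/
def OrbitRep (s : Fin m → G) (act : G → (ℕ → A) → ℕ → A) (X : Set (ℕ → A)) :
    Set (List (Fin m) × ℕ → A) :=
  {z | ∃ x ∈ X, ∀ u, (fun n => z (u, n)) = act (u.map s).prod x}

variable {s : Fin m → G} {act : G → (ℕ → A) → ℕ → A} {X : Set (ℕ → A)}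

theorem mem_orbitRep_iff (hact : IsActionOn act X) {i₀ : Fin m} (hi₀ : s i₀ = 1)
    {z : List (Fin m) × ℕ → A} : z ∈ OrbitRep s act X ↔
      (∀ u, (fun n i => z (i :: u, n)) ∈ SetRep s act X) ∧ ∀ q, z (i₀ :: q.1, q.2) = z q := by
  obtain ⟨hmaps, hone, hmul⟩ := hact
  constructor
  · rintro ⟨x, hx, hz⟩
    refine ⟨fun u => ⟨act (u.map s).prod x, hmaps _ hx, fun i => ?_⟩, fun ⟨u, n⟩ => ?_⟩
    · simp only [hz, List.map_cons, List.prod_cons, hmul _ _ _ hx]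
    · have hu : (fun n => z (i₀ :: u, n)) = fun n => z (u, n) := by simp [hz, hi₀]
      exact congrFun hu n
  · rintro ⟨hrep, hstay⟩
    have hstep (u) : (fun n => z (u, n)) ∈ X ∧
        ∀ i, (fun n => z (i :: u, n)) = act (s i) fun n => z (u, n) := by
      obtain ⟨x, hx, hz⟩ := hrep u
      have hzx : (fun n => z (u, n)) = x := by
        rw [← hone x hx, ← hi₀, ← hz i₀]
        exact funext fun n => (hstay (u, n)).symm
      exact hzx ▸ ⟨hx, hz⟩
    refine ⟨fun n => z ([], n), (hstep []).1, fun u => ?_⟩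
    induction u with
    | nil => exact (hone _ (hstep []).1).symm
    | cons i u ih =>
      rw [(hstep u).2 i, ih, ← hmul _ _ _ (hstep []).1, List.map_cons, List.prod_cons]

variable [Primcodable A] [Finite A] [TopologicalSpace A] [DiscreteTopology A]

theorem IsEffClosedActionWith.isPi01_orbitRep (h : IsEffClosedActionWith s act X) :
    IsPi01 (OrbitRep s act X) := by
  obtain ⟨-, hact, ⟨i₀, hi₀⟩, -, heff⟩ := h
  have hstep : Primrec₂ fun (u : List (Fin m)) (q : ℕ × Fin m) => (q.2 :: u, q.1) :=
    (Primrec.list_cons.comp (Primrec.snd.comp Primrec.snd) Primrec.fst).pair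
      (Primrec.fst.comp Primrec.snd)
  have hstay : Primrec fun q : List (Fin m) × ℕ => (i₀ :: q.1, q.2) :=
    (Primrec.list_cons.comp (Primrec.const i₀) Primrec.fst).pair Primrec.snd
  convert (heff.isPi01.forall_comp hstep).inter (isPi01_setOf_comp_eq hstay Primrec.id) using 1
  exact Set.ext fun z => mem_orbitRep_iff hact hi₀

end OrbitRep

/-! ### Coinduced actions -/

section Coind

variable {G β : Type*} [Group G] {N : Subgroup G} {T : Set G}
  (hT : Subgroup.IsComplement (N : Set G) T)

/-- The action of `G` coinduced from an action of `N`, written in the coordinates given by a right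
transversal `T` of `N`: an `N`-equivariant map `f : G → β` is encoded by its restriction to `T`,
and `G` acts by `(g • f) h = f (h * g)`. -/
noncomputable def coind (act : N → β → β) (g : G) (x : T → β) : T → β := fun c =>
  act (hT.equiv (c * g)).1 (x (hT.equiv (c * g)).2)

theorem equiv_subgroup_mul (n : N) (g : G) :
    hT.equiv (n * g) = (n * (hT.equiv g).1, (hT.equiv g).2) :=
  hT.equiv_mul_left n g

theorem equiv_mul_mul (g h : G) : hT.equiv (g * h) =
    ((hT.equiv g).1 * (hT.equiv ((hT.equiv g).2 * h)).1, (hT.equiv ((hT.equiv g).2 * h)).2) := by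
  rw [← equiv_subgroup_mul, ← mul_assoc, hT.equiv_fst_mul_equiv_snd]

theorem equiv_subgroup_mul_transversal (n : N) (c : T) : hT.equiv (n * c) = (n, c) :=
  hT.equiv.apply_symm_apply (n, c)

theorem equiv_transversal (c : T) : hT.equiv c = ((1 : N), c) := by
  simpa using equiv_subgroup_mul_transversal hT 1 c

variable {act : N → β → β}

theorem isActionOn_coind {X : Set β} (hact : IsActionOn act X) :
    IsActionOn (coind hT act) (Set.univ.pi fun _ => X) := by
  obtain ⟨hmaps, hone, hmul⟩ := hact
  refine ⟨fun g x hx c _ => hmaps _ (hx _ trivial), fun x hx => funext fun c => ?_,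
    fun g h x hx => funext fun c => ?_⟩
  · simp only [coind, mul_one, equiv_transversal]
    exact hone _ (hx c trivial)
  · simp only [coind, ← mul_assoc, equiv_mul_mul hT (c * g) h]
    exact hmul _ _ _ (hx _ trivial)

theorem coind_apply_one (h1 : (1 : G) ∈ T) (n : N) (x : T → β) :
    coind hT act n x ⟨1, h1⟩ = act n (x ⟨1, h1⟩) := by
  have hn : hT.equiv (1 * n) = (n, ⟨1, h1⟩) := by
    simpa using equiv_subgroup_mul_transversal hT n ⟨1, h1⟩
  simp only [coind, hn]

theorem IsActionOn.conj {γ : Type*} {act : G → β → β} {X : Set β} (hact : IsActionOn act X)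
    (e : γ ≃ β) : IsActionOn (fun g y => e.symm (act g (e y))) (e ⁻¹' X) := by
  obtain ⟨hmaps, hone, hmul⟩ := hact
  refine ⟨fun g y hy => ?_, fun y hy => ?_, fun g h y hy => ?_⟩
  · simpa using hmaps g hy
  · simp [hone _ hy]
  · simp [hmul _ _ _ hy]

end Coind

section Interleave

variable {ι A : Type*}

/-- A sequence read as the interleaving of a family of sequences: the enumeration `σ` assigns to
each position the track it belongs to and the index within that track. -/
def tracks [TopologicalSpace A] (σ : ℕ ≃ ℕ × ι) : (ℕ → A) ≃ₜ (ι → ℕ → A) where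
  toFun y c n := y (σ.symm (n, c))
  invFun x n := x (σ n).2 (σ n).1
  left_inv y := by simp
  right_inv x := by simp
  continuous_toFun := by fun_prop
  continuous_invFun := by fun_prop

theorem exists_primcodable_primrec_equiv (ι : Type*) [Finite ι] [Nonempty ι] :
    ∃ (_ : Primcodable ι) (σ : ℕ ≃ ℕ × ι), Primrec σ := by
  obtain ⟨k, ⟨e⟩⟩ := Finite.exists_equiv_fin ι
  have : NeZero k := ⟨by rintro rfl; exact (e (Classical.arbitrary ι)).elim0⟩
  let _ : Primcodable ι := Primcodable.ofEquiv (Fin k) e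
  refine ⟨inferInstance, (Nat.divModEquiv k).trans ((Equiv.refl ℕ).prodCongr e.symm), ?_⟩
  have hmod : Primrec fun n : ℕ => Fin.ofNat k n :=
    Primrec.fin_val_iff.1 (Primrec.nat_mod.comp Primrec.id (Primrec.const k))
  exact (Primrec.nat_div.comp Primrec.id (Primrec.const k)).pair
    ((Primrec.of_equiv_symm (e := e)).comp hmod)

end Interleave

section InterleavedCoind

variable {G A : Type*} [Group G] {N : Subgroup G} {T : Set G}
  (hT : Subgroup.IsComplement (N : Set G) T) (σ : ℕ ≃ ℕ × T) {m k : ℕ} {s : Fin m → N}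
  {t : Fin k → G}

/-- Where the `n`-th letter of the translate by `t i`, under the interleaved coinduced action, is
found: the track, the word over the generators of `N` by which that track is translated, and the
index within the translate. -/
noncomputable def sourceIndex (t : Fin k → G) (word : N → List (Fin m)) (n : ℕ) (i : Fin k) :
    T × List (Fin m) × ℕ :=
  ((hT.equiv ((σ n).2 * t i)).2, word (hT.equiv ((σ n).2 * t i)).1, (σ n).1)

theorem primrec₂_sourceIndex [Finite T] [Primcodable T] {σ : ℕ ≃ ℕ × T} (hσ : Primrec σ)
    (word : N → List (Fin m)) : Primrec₂ (sourceIndex hT σ t word) := by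
  have hcoset : Primrec fun p : T × Fin k => (hT.equiv (p.1 * t p.2)).2 := Primrec.dom_finite _
  have hword : Primrec fun p : T × Fin k => word (hT.equiv (p.1 * t p.2)).1 :=
    Primrec.dom_finite _
  have htrack : Primrec₂ fun (n : ℕ) (i : Fin k) => ((σ n).2, i) :=
    (Primrec.snd.comp (hσ.comp Primrec.fst)).pair Primrec.snd
  exact (hcoset.comp htrack).pair
    ((hword.comp htrack).pair (Primrec.fst.comp (hσ.comp Primrec.fst)))

variable [TopologicalSpace A]

/-- The coinduced action of `G` on `T → X`, carried over to a subset of `ℕ → A` by interleaving. -/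
noncomputable def interleavedCoind (act : N → (ℕ → A) → ℕ → A) (g : G) (y : ℕ → A) : ℕ → A :=
  (tracks σ).symm (coind hT act g (tracks σ y))

/-- The space on which `interleavedCoind` acts: the sequences all of whose tracks lie in `X`. -/
def interleavedPi {ι : Type*} (σ : ℕ ≃ ℕ × ι) (X : Set (ℕ → A)) : Set (ℕ → A) :=
  tracks σ ⁻¹' Set.univ.pi fun _ => X

variable {act : N → (ℕ → A) → ℕ → A} {X : Set (ℕ → A)}

theorem isActionOn_interleavedCoind (hact : IsActionOn act X) :
    IsActionOn (interleavedCoind hT σ act) (interleavedPi σ X) :=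
  (isActionOn_coind hT hact).conj (tracks σ).toEquiv

theorem setRep_interleavedCoind_eq_image {word : N → List (Fin m)}
    (hword : ∀ n, ((word n).map s).prod = n) :
    SetRep t (interleavedCoind hT σ act) (interleavedPi σ X) =
      (fun z n i => z (sourceIndex hT σ t word n i)) ''
        {z : T × List (Fin m) × ℕ → A | ∀ c, z ∘ Prod.mk c ∈ OrbitRep s act X} := by
  ext y
  constructor
  · rintro ⟨x, hx, hy⟩
    refine ⟨fun q => act (q.2.1.map s).prod (tracks σ x q.1) q.2.2,
      fun c => ⟨tracks σ x c, hx c trivial, fun u => rfl⟩, funext fun n => funext fun i => ?_⟩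
    simp only [sourceIndex, hword]
    exact (congrFun (hy i) n).symm
  · rintro ⟨z, hz, rfl⟩
    choose x hx hzx using hz
    refine ⟨(tracks σ).symm x, fun c _ => by simpa using hx c, fun i => funext fun n => ?_⟩
    let p := hT.equiv ((σ n).2 * t i)
    calc z (p.2, word p.1, (σ n).1)
        = act ((word p.1).map s).prod (x p.2) (σ n).1 := congrFun (hzx p.2 (word p.1)) (σ n).1
      _ = act p.1 (x p.2) (σ n).1 := by rw [hword]
      _ = interleavedCoind hT σ act (t i) ((tracks σ).symm x) n := by
          rw [interleavedCoind, Homeomorph.apply_symm_apply]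
          rfl

theorem IsEffClosedActionWith.interleavedCoind [Primcodable A] [Finite A] [Nonempty A]
    [DiscreteTopology A] [Finite T] [Primcodable T]
    (h : IsEffClosedActionWith s act X) (hσ : Primrec σ) (hone : ∃ i, t i = 1)
    (ht : Submonoid.closure (Set.range t) = ⊤) :
    IsEffClosedActionWith t (interleavedCoind hT σ act) (interleavedPi σ X) := by
  have hpi := h.isPi01_orbitRep
  obtain ⟨hclosed, hact, -, hs, -⟩ := h
  refine ⟨(isClosed_set_pi fun _ _ => hclosed).preimage (tracks σ).continuous,
    isActionOn_interleavedCoind hT σ hact, hone, ht, ?_⟩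
  have hword := Function.rightInverse_surjInv (surjective_word_prod hs)
  rw [setRep_interleavedCoind_eq_image hT σ hword]
  exact (hpi.forall_comp Primrec₂.pair).effectivelyClosedSet_comp (primrec₂_sourceIndex hT hσ _)

end InterleavedCoind

/-! ### Factors of subshifts of finite type -/

section FactorMaps

variable {G H A B β γ : Type*} [Group G] [Group H] [TopologicalSpace A] [TopologicalSpace B]
  [TopologicalSpace β] [TopologicalSpace γ] {Z : Set (G → A)} {φ : (G → A) → β}
  {act : G → β → β} {Y : Set β}

theorem IsFactorMapOnto.precomp (hφ : IsFactorMapOnto Z φ act Y) (ι : H → G)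
    {e : (H → B) → G → A} (hcont : Continuous e) (hsurj : Function.Surjective e)
    (hshift : ∀ h x, e (shift h x) = shift (ι h) (e x)) :
    IsFactorMapOnto (e ⁻¹' Z) (φ ∘ e) (fun h => act (ι h)) Y := by
  obtain ⟨hφcont, hmaps, hφsurj, hequiv⟩ := hφ
  refine ⟨hφcont.comp hcont.continuousOn (Set.mapsTo_preimage e Z),
    hmaps.comp (Set.mapsTo_preimage e Z), fun y hy => ?_, fun h x hx => ?_⟩
  · obtain ⟨z, hz, rfl⟩ := hφsurj hy
    obtain ⟨x, rfl⟩ := hsurj z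
    exact ⟨x, hz, rfl⟩
  · simp only [Function.comp_apply, hshift]
    exact hequiv _ _ hx

theorem IsFactorMapOnto.postcomp (hφ : IsFactorMapOnto Z φ act Y) {ψ : β → γ} {act' : G → γ → γ}
    {Y' : Set γ} (hcont : ContinuousOn ψ Y) (hmaps : Set.MapsTo ψ Y Y')
    (hsurj : Set.SurjOn ψ Y Y') (hequiv : ∀ g, ∀ y ∈ Y, ψ (act g y) = act' g (ψ y)) :
    IsFactorMapOnto Z (ψ ∘ φ) act' Y' := by
  obtain ⟨hφcont, hφmaps, hφsurj, hφequiv⟩ := hφ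
  refine ⟨hcont.comp hφcont hφmaps, hmaps.comp hφmaps, hsurj.comp hφsurj, fun g x hx => ?_⟩
  simp only [Function.comp_apply, hφequiv g x hx]
  exact hequiv g _ (hφmaps hx)

end FactorMaps

theorem IsSFT.preimage_comp {G A B : Type*} [Group G] {Z : Set (G → A)} (hZ : IsSFT Z)
    (f : B → A) : IsSFT ((f ∘ ·) ⁻¹' Z : Set (G → B)) := by
  obtain ⟨F, L, hF⟩ := hZ
  exact ⟨F, {p | f ∘ p ∈ L}, fun x => hF (f ∘ x)⟩

theorem IsSFT.isFactorOfSFT {G B A : Type*} [Group G] [Finite B] [TopologicalSpace B]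
    [TopologicalSpace A] {Z : Set (G → B)} (hZ : IsSFT Z)
    {φ : (G → B) → ℕ → A} {act : G → (ℕ → A) → ℕ → A} {X : Set (ℕ → A)}
    (hφ : IsFactorMapOnto Z φ act X) : IsFactorOfSFT act X := by
  obtain ⟨k, ⟨e⟩⟩ := Finite.exists_equiv_fin B
  have hcont : Continuous fun x : G → Fin k => e.symm ∘ x :=
    continuous_pi fun g => continuous_of_discreteTopology.comp (continuous_apply g)
  exact ⟨k, _, _, hZ.preimage_comp e.symm, hφ.precomp id hcont e.symm.surjective.comp_left
    fun _ _ => rfl⟩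

section Ungroup

variable {G A : Type*} [Group G] {N : Subgroup G} {T : Set G}
  (hT : Subgroup.IsComplement (N : Set G) T)

/-- A configuration on `N` with letters in `T → A`, unfolded to the configuration on `G` whose
value at `n * c` is read in the `c`-th coordinate of the letter at `n`. -/
noncomputable def ungroup (x : N → T → A) (g : G) : A :=
  x (hT.equiv g).1 (hT.equiv g).2

theorem continuous_ungroup [TopologicalSpace A] :
    Continuous (ungroup hT : (N → T → A) → G → A) :=
  continuous_pi fun _ => (continuous_apply _).comp (continuous_apply _)

theorem surjective_ungroup : Function.Surjective (ungroup hT : (N → T → A) → G → A) :=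
  fun z => ⟨fun n c => z (n * c), funext fun g => congrArg z (hT.equiv_fst_mul_equiv_snd g)⟩

theorem ungroup_shift (n : N) (x : N → T → A) :
    ungroup hT (shift n x) = shift (n : G) (ungroup hT x) := by
  funext g
  simp only [ungroup, shift, ← N.coe_inv, equiv_subgroup_mul]

theorem ungroup_mul_mul (x : N → T → A) (n : N) (g : G) :
    ungroup hT x (n * g) = x (n * (hT.equiv g).1) (hT.equiv g).2 := by
  simp only [ungroup, equiv_subgroup_mul]

theorem IsSFT.preimage_ungroup [Finite T] {Z : Set (G → A)} (hZ : IsSFT Z) :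
    IsSFT (ungroup hT ⁻¹' Z) := by
  classical
  have := Fintype.ofFinite T
  obtain ⟨F, L, hF⟩ := hZ
  let F' : Finset N := Finset.univ.image fun p : T × F => (hT.equiv (p.1 * p.2)).1
  have hF' (c : T) (f : F) : (hT.equiv (c * f)).1 ∈ F' :=
    Finset.mem_image_of_mem (fun p : T × F => (hT.equiv (p.1 * p.2)).1) (Finset.mem_univ (c, f))
  refine ⟨F', {p | ∀ c : T, (fun f : F => p ⟨_, hF' c f⟩ (hT.equiv (c * f)).2) ∈ L}, fun x => ?_⟩
  calc x ∈ ungroup hT ⁻¹' Z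
      ↔ ∀ g : G, (fun f : F => ungroup hT x (g * f)) ∈ L := hF _
    _ ↔ ∀ p : N × T, (fun f : F => ungroup hT x (p.1 * p.2 * f)) ∈ L :=
        hT.2.forall
    _ ↔ ∀ n, ∀ c : T, (fun f : F => x (n * (hT.equiv (c * f)).1) (hT.equiv (c * f)).2) ∈ L := by
        simp only [mul_assoc, ungroup_mul_mul, Prod.forall]

end Ungroup

theorem IsFactorOfSFT.of_interleavedCoind {G A : Type*} [Group G] {N : Subgroup G} {T : Set G}
    [Finite T] [TopologicalSpace A] {hT : Subgroup.IsComplement (N : Set G) T} {σ : ℕ ≃ ℕ × T}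
    (h1 : (1 : G) ∈ T) {act : N → (ℕ → A) → ℕ → A} {X : Set (ℕ → A)}
    (h : IsFactorOfSFT (interleavedCoind hT σ act) (interleavedPi σ X)) :
    IsFactorOfSFT act X := by
  obtain ⟨k, Z, φ, hZ, hφ⟩ := h
  have hrestrict := hφ.precomp ((↑) : N → G) (continuous_ungroup hT) (surjective_ungroup hT)
    (ungroup_shift hT)
  refine (hZ.preimage_ungroup hT).isFactorOfSFT
    (hrestrict.postcomp (ψ := fun y => tracks σ y ⟨1, h1⟩) ?_ ?_ ?_ ?_)
  · exact ((continuous_apply _).comp (tracks σ).continuous).continuousOn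
  · exact fun y hy => hy _ trivial
  · exact fun x hx => ⟨(tracks σ).symm fun _ => x, fun c _ => by simpa using hx, by simp⟩
  · intro n y _
    simp only [interleavedCoind, Homeomorph.apply_symm_apply, coind_apply_one]

/-- A finite index subgroup of a finitely generated self-simulable group is
finitely generated and self-simulable. -/
theorem finiteIndex_subgroup_selfSimulable
    (G : Type*) [Group G] (hfg : Group.FG G) (hss : SelfSimulable G)
    (N : Subgroup G) (hfi : N.FiniteIndex) :
    Group.FG ↥N ∧ SelfSimulable ↥N := by
  refine ⟨N.fg_of_index_ne_zero, fun X act ⟨m, s, hX⟩ => ?_⟩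
  obtain ⟨T, hT, h1⟩ := N.exists_isComplement_right 1
  have : Finite T := hT.finite_right_iff.2 hfi
  have : Nonempty T := ⟨1, h1⟩
  obtain ⟨_, σ, hσ⟩ := exists_primcodable_primrec_equiv T
  obtain ⟨k, t, hone, ht⟩ := exists_generating_tuple G
  exact (hss _ _ ⟨k, t, hX.interleavedCoind hT σ hσ hone ht⟩).of_interleavedCoind h1

end SelfSim
end
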